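/- arXiv:1409.8423 — 7 statements merged into one kernel-verified Lean document; each statement's English description precedes it below -/
import Mathlib

section
/- Let p₁, p₂, p₃ be distinct rational primes such that p₁ ≡ p₂ ≡ p₃ ≡ 2 (mod 9) or p₁ ≡ p₂ ≡ p₃ ≡ 5 (mod 9), and set A = p₁²p₂²p₃². Then the subset of k*/(k*)³ consisting of the classes [α] of those α ∈ k* for which C_{A,α}(k_q) ≠ ∅ for every prime element q of ℤ[ζ₃] is exactly the subgroup of k*/(k*)³ generated by the classes [A] and [p₁p₂²]. -/
open NumberField IsDedekindDomain

/-- The height-one prime of a Dedekind domain determined by a prime element. -/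
noncomputable def primeSpec {R : Type*} [CommRing R] [IsDomain R] [IsDedekindDomain R]
    {q : R} (hq : Prime q) : HeightOneSpectrum R where
  asIdeal := Ideal.span {q}
  isPrime := (Ideal.span_singleton_prime hq.ne_zero).mpr hq
  ne_bot := by simpa [Ne, Ideal.span_singleton_eq_bot] using hq.ne_zero

/-! Consider `α x³ + α⁻¹ y³ = A z³` locally at each prime `q` of `ℤ[ζ₃]`. Away from `3A` a point
forces the `q`-adic valuation of `α` to be divisible by `3`, so up to cubes `α = v ∏ pᵢ ^ eᵢ` with
`v ^ 3 = 1`. At `pᵢ ∣ A` the valuation of `A` is prime to `3`, so two of the three terms dominate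
and a point exists iff `α` lies in `⟨A⟩` modulo cubes. As `pᵢ ≡ 2 mod 3`, rational integers prime
to `pᵢ` are cubes in the completion, whereas a primitive cube root of unity is not since `pᵢ² ≢ 1
mod 9`; hence the condition is `v = 1`. At `λ = ζ₃ - 1` cubes of integral elements are `0` or `±1`
modulo `λ³`, and the condition becomes `∏ pᵢ ^ eᵢ ≡ ±1 mod 9`, that is `3 ∣ ∑ eᵢ`. Modulo `3`
these exponent vectors are spanned by those of `A` and `p₁p₂²`. -/

section Cubes

/-- `x` is a cube, the analogue of `IsSquare` for exponent `3`. -/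
def IsCube {M : Type*} [Monoid M] (x : M) : Prop := ∃ r, x = r ^ 3

lemma IsCube.pow_three {M : Type*} [Monoid M] (r : M) : IsCube (r ^ 3) := ⟨r, rfl⟩

lemma IsCube.mul {M : Type*} [CommMonoid M] {x y : M} (hx : IsCube x) (hy : IsCube y) :
    IsCube (x * y) := by
  obtain ⟨r, rfl⟩ := hx
  obtain ⟨s, rfl⟩ := hy
  exact ⟨r * s, (mul_pow r s 3).symm⟩

lemma IsCube.pow {M : Type*} [CommMonoid M] {x : M} (hx : IsCube x) (n : ℕ) : IsCube (x ^ n) := by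
  obtain ⟨r, rfl⟩ := hx
  exact ⟨r ^ n, pow_right_comm r 3 n⟩

lemma IsCube.map {M N : Type*} [Monoid M] [Monoid N] (f : M →* N) {x : M} (hx : IsCube x) :
    IsCube (f x) := by
  obtain ⟨r, rfl⟩ := hx
  exact ⟨f r, map_pow f r 3⟩

lemma IsCube.neg {R : Type*} [Ring R] {x : R} (hx : IsCube x) : IsCube (-x) := by
  obtain ⟨r, rfl⟩ := hx
  exact ⟨-r, (Odd.neg_pow (by decide) r).symm⟩

lemma IsCube.div {G : Type*} [DivisionCommMonoid G] {x y : G} (hx : IsCube x) (hy : IsCube y) :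
    IsCube (x / y) := by
  obtain ⟨r, rfl⟩ := hx
  obtain ⟨s, rfl⟩ := hy
  exact ⟨r / s, (div_pow r s 3).symm⟩

variable {F : Type*} [Field F]

lemma isCube_of_isCube_sq {x : F} (hx : IsCube (x ^ 2)) : IsCube x := by
  obtain rfl | hx0 := eq_or_ne x 0
  · exact ⟨0, by simp⟩
  · simpa [pow_succ, hx0] using (IsCube.pow_three x).div hx

lemma isCube_mul_left_iff {x y : F} (hx : IsCube x) (hx0 : x ≠ 0) : IsCube (x * y) ↔ IsCube y :=
  ⟨fun h => by simpa [hx0] using h.div hx, hx.mul⟩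

lemma IsCube.of_mul_pow_three_div {a b x y : F}
    (hx : x ≠ 0) (hy : y ≠ 0) (h : IsCube (a * x ^ 3 / (b * y ^ 3))) : IsCube (a / b) := by
  have : a / b = a * x ^ 3 / (b * y ^ 3) * (y / x) ^ 3 := by field_simp
  exact this ▸ h.mul (.pow_three _)

end Cubes

section HasPoint

variable {F : Type*} [Field F]

/-- The plane cubic `C_{A,α} : α x³ + α⁻¹ y³ = A z³` has a point over the field `F`. -/
def CubicHasPoint (A α : F) : Prop :=
  ∃ x y z : F, ¬(x = 0 ∧ y = 0 ∧ z = 0) ∧ α * x ^ 3 + α⁻¹ * y ^ 3 = A * z ^ 3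

lemma cubicHasPoint_mul_pow_three {A α γ : F} (hγ : γ ≠ 0) :
    CubicHasPoint A (α * γ ^ 3) ↔ CubicHasPoint A α := by
  constructor
  · rintro ⟨x, y, z, hne, h⟩
    exact ⟨γ * x, γ⁻¹ * y, z, by simpa [hγ] using hne, by rw [← h, mul_inv]; ring⟩
  · rintro ⟨x, y, z, hne, h⟩
    refine ⟨γ⁻¹ * x, γ * y, z, by simpa [hγ] using hne, ?_⟩
    rw [← h]
    field_simp

lemma IsCube.cubicHasPoint {α : F} (hα : IsCube α) (A : F) : CubicHasPoint A α := by
  obtain ⟨t, rfl⟩ := hα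
  obtain rfl | ht := eq_or_ne t 0
  · exact ⟨1, 0, 0, by simp, by simp⟩
  · exact ⟨1, -t ^ 2, 0, by simp, by field_simp [ht]; ring⟩

lemma cubicHasPoint_of_isCube_mul_pow {A α : F} (hA : A ≠ 0) (hα : α ≠ 0) {j : ℕ}
    (h : IsCube (α * A ^ j)) : CubicHasPoint A α := by
  have hj : IsCube (α * A ^ (j % 3)) := by
    refine (isCube_mul_left_iff (.pow_three (A ^ (j / 3))) (by simp [hA])).1 ?_
    rwa [mul_left_comm, ← pow_mul, ← pow_add, mul_comm (j / 3), Nat.div_add_mod]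
  obtain h | h | h : j % 3 = 0 ∨ j % 3 = 1 ∨ j % 3 = 2 := by lia
  all_goals rw [h] at hj
  · exact IsCube.cubicHasPoint (by simpa using hj) A
  · obtain ⟨t, ht⟩ := hj
    exact ⟨0, t, 1, by simp, by rw [← ht]; field_simp; ring⟩
  · obtain ⟨t, ht⟩ := hj
    exact ⟨A, 0, t, by simp [hA], by rw [← ht]; ring⟩

end HasPoint

section CubeRootStep

/-- The Newton-type map whose fixed points `z` satisfy `(1 + z) ^ 3 = 1 + m`. -/
def cubeRootStep {L : Type*} [Field L] (m z : L) : L := m / 3 - z ^ 2 - z ^ 3 / 3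

lemma cubeRootStep_sub {L : Type*} [Field L] (m z w : L) :
    cubeRootStep m z - cubeRootStep m w =
      -(z - w) * ((z + w) + (z * z + z * w + w * w) / 3) := by
  unfold cubeRootStep
  ring

lemma one_add_pow_three_of_cubeRootStep_eq_self {L : Type*} [Field L] (h3 : (3 : L) ≠ 0) {m z : L}
    (hz : cubeRootStep m z = z) : (1 + z) ^ 3 = 1 + m := by
  unfold cubeRootStep at hz
  field_simp at hz
  linear_combination -hz

end CubeRootStep

section NormedField

variable {L : Type*} [NormedField L]

lemma not_norm_eq_of_norm_ne_pow_three {A α x y z : L} (hA0 : A ≠ 0) (hα : α ≠ 0)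
    (hA : ∀ t : L, ‖A‖ ≠ ‖t‖ ^ 3) (hne : ¬(x = 0 ∧ y = 0 ∧ z = 0)) :
    ¬(‖α⁻¹ * y ^ 3‖ = ‖α * x ^ 3‖ ∧ ‖A * z ^ 3‖ = ‖α * x ^ 3‖) := by
  rintro ⟨hy, hz⟩
  have hx0 : x ≠ 0 := fun hx => hne ⟨hx, by simpa [hx, hα] using hy, by simpa [hx, hA0] using hz⟩
  have hX : ‖α * x ^ 3‖ ≠ 0 := by simp [hα, hx0]
  have hxyz : x * y * z ≠ 0 := by
    have hy0 : y ≠ 0 := fun h => hX (by simp [← hy, h])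
    have hz0 : z ≠ 0 := fun h => hX (by simp [← hz, h])
    exact mul_ne_zero (mul_ne_zero hx0 hy0) hz0
  refine hA (α * x ^ 3 / (x * y * z)) ?_
  have hprod : ‖A‖ * ‖x * y * z‖ ^ 3 = ‖α * x ^ 3‖ ^ 3 := by
    calc ‖A‖ * ‖x * y * z‖ ^ 3 = ‖α * x ^ 3 * (α⁻¹ * y ^ 3) * (A * z ^ 3)‖ := by
          rw [← norm_pow, ← norm_mul]
          congr 1
          field_simp
      _ = ‖α * x ^ 3‖ ^ 3 := by rw [norm_mul, norm_mul, hy, hz]; ring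
  rw [norm_div, div_pow, eq_div_iff (pow_ne_zero 3 (norm_ne_zero_iff.2 hxyz)), hprod]

lemma exists_norm_le_one_of_cubicHasPoint {A α : L} (hα : α ≠ 0) (h : CubicHasPoint A α) :
    ∃ x y z : L, ‖x‖ ≤ 1 ∧ ‖y‖ ≤ 1 ∧ ‖z‖ ≤ 1 ∧ (‖x‖ = 1 ∨ ‖y‖ = 1 ∨ ‖z‖ = 1) ∧
      α ^ 2 * x ^ 3 + y ^ 3 = A * α * z ^ 3 := by
  obtain ⟨x, y, z, hne, h⟩ := h
  obtain ⟨t, ht, hx, hy, hz⟩ : ∃ t, (x = t ∨ y = t ∨ z = t) ∧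
      ‖x‖ ≤ ‖t‖ ∧ ‖y‖ ≤ ‖t‖ ∧ ‖z‖ ≤ ‖t‖ := by
    rcases le_total ‖x‖ ‖y‖ with h1 | h1 <;> rcases le_total ‖x‖ ‖z‖ with h2 | h2 <;>
      rcases le_total ‖y‖ ‖z‖ with h3 | h3 <;> grind
  have ht0 : t ≠ 0 := by
    rintro rfl
    exact hne (by simpa using And.intro hx (And.intro hy hz))
  have hle {w : L} (hw : ‖w‖ ≤ ‖t‖) : ‖w / t‖ ≤ 1 := by
    rwa [norm_div, div_le_one (norm_pos_iff.2 ht0)]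
  refine ⟨x / t, y / t, z / t, hle hx, hle hy, hle hz, ?_, ?_⟩
  · rcases ht with rfl | rfl | rfl <;> simp [ht0]
  · field_simp at h ⊢
    linear_combination h

end NormedField

section Ultrametric

variable {L : Type*} [NormedField L] [IsUltrametricDist L]

lemma ultrametric_norm_add_le {x y : L} {c : ℝ} (hx : ‖x‖ ≤ c) (hy : ‖y‖ ≤ c) : ‖x + y‖ ≤ c :=
  (IsUltrametricDist.norm_add_le_max x y).trans (max_le hx hy)

lemma ultrametric_norm_sub_le {x y : L} {c : ℝ} (hx : ‖x‖ ≤ c) (hy : ‖y‖ ≤ c) : ‖x - y‖ ≤ c :=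
  sub_eq_add_neg x y ▸ ultrametric_norm_add_le hx ((norm_neg y).trans_le hy)

lemma norm_cubeRootStep_sub_le (m : L) {z w : L} {ρ : ℝ} (hz : ‖z‖ ≤ ρ) (hw : ‖w‖ ≤ ρ) :
    ‖cubeRootStep m z - cubeRootStep m w‖ ≤ max ρ (ρ ^ 2 / ‖(3 : L)‖) * ‖z - w‖ := by
  have hmul {a b : L} (ha : ‖a‖ ≤ ρ) (hb : ‖b‖ ≤ ρ) : ‖a * b‖ ≤ ρ ^ 2 := by
    rw [norm_mul, sq]
    gcongr
    exact (norm_nonneg a).trans ha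
  have hquad : ‖z * z + z * w + w * w‖ ≤ ρ ^ 2 :=
    ultrametric_norm_add_le (ultrametric_norm_add_le (hmul hz hz) (hmul hz hw)) (hmul hw hw)
  rw [cubeRootStep_sub, norm_mul, norm_neg, mul_comm]
  gcongr
  refine ultrametric_norm_add_le
    ((ultrametric_norm_add_le hz hw).trans (le_max_left _ _)) (le_max_of_le_right ?_)
  rw [norm_div]
  gcongr

lemma exists_cubeRootStep_eq_self [CompleteSpace L] {m : L} {ρ : ℝ} (hm : ‖m / 3‖ ≤ ρ)
    (hκ : max ρ (ρ ^ 2 / ‖(3 : L)‖) < 1) : ∃ z, cubeRootStep m z = z := by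
  set B := Metric.closedBall (0 : L) ρ
  have hmem {z : L} : z ∈ B ↔ ‖z‖ ≤ ρ := mem_closedBall_zero_iff
  have hρ : 0 ≤ ρ := (norm_nonneg _).trans hm
  have hmaps : Set.MapsTo (cubeRootStep m) B B := fun z hz => by
    have hstep := norm_cubeRootStep_sub_le m (hmem.1 hz) (w := 0) (by simpa using hρ)
    have hle : ‖cubeRootStep m z - cubeRootStep m 0‖ ≤ ρ :=
      hstep.trans ((mul_le_of_le_one_left (norm_nonneg _) hκ.le).trans (by simpa using hmem.1 hz))
    have hzero : cubeRootStep m 0 = m / 3 := by simp [cubeRootStep]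
    rw [← sub_add_cancel (cubeRootStep m z) (cubeRootStep m 0)]
    exact hmem.2 (ultrametric_norm_add_le hle (hzero ▸ hm))
  have hcontr : ContractingWith (max ρ (ρ ^ 2 / ‖(3 : L)‖)).toNNReal (hmaps.restrict _ _ _) := by
    refine ⟨by simpa using hκ, LipschitzWith.of_dist_le_mul fun z w => ?_⟩
    rw [Real.coe_toNNReal _ (le_max_of_le_left hρ), Subtype.dist_eq, Subtype.dist_eq,
      dist_eq_norm, dist_eq_norm]
    exact norm_cubeRootStep_sub_le m (hmem.1 z.2) (hmem.1 w.2)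
  obtain ⟨z, -, hz, -⟩ := hcontr.exists_fixedPoint' Metric.isClosed_closedBall.isComplete hmaps
    (hmem.2 (by simpa using hρ)) (edist_ne_top 0 _)
  exact ⟨z, hz⟩

lemma isCube_of_norm_sub_one_sq_lt [CompleteSpace L] {x : L} (h : ‖x - 1‖ ^ 2 < ‖(3 : L)‖ ^ 3) :
    IsCube x := by
  have h3 : 0 < ‖(3 : L)‖ := by
    by_contra! h0
    exact (sq_nonneg ‖x - 1‖).not_gt (by simpa [le_antisymm h0 (norm_nonneg _)] using h)
  have hρ3 : ‖(x - 1) / 3‖ ^ 2 < ‖(3 : L)‖ := by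
    rw [norm_div, div_pow, div_lt_iff₀ (by positivity)]
    linarith [pow_succ' ‖(3 : L)‖ 2]
  have hρ1 : ‖(x - 1) / 3‖ < 1 := (sq_lt_one_iff₀ (norm_nonneg _)).1
    (hρ3.trans_le (by exact_mod_cast IsUltrametricDist.norm_natCast_le_one L 3))
  obtain ⟨z, hz⟩ := exists_cubeRootStep_eq_self le_rfl (max_lt hρ1 ((div_lt_one h3).2 hρ3))
  refine ⟨1 + z, ?_⟩
  rw [one_add_pow_three_of_cubeRootStep_eq_self (norm_pos_iff.1 h3) hz, add_sub_cancel]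

lemma isCube_of_norm_sub_one_lt [CompleteSpace L] (h3 : ‖(3 : L)‖ = 1) {x : L}
    (h : ‖x - 1‖ < 1) : IsCube x :=
  isCube_of_norm_sub_one_sq_lt (by simpa [h3] using (sq_lt_one_iff₀ (norm_nonneg _)).2 h)

lemma isCube_of_norm_sub_one_le_norm_nine [CompleteSpace L] (h0 : (3 : L) ≠ 0)
    (h1 : ‖(3 : L)‖ < 1) {x : L} (h : ‖x - 1‖ ≤ ‖(9 : L)‖) : IsCube x := by
  refine isCube_of_norm_sub_one_sq_lt ?_
  calc ‖x - 1‖ ^ 2 ≤ ‖(9 : L)‖ ^ 2 := by gcongr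
    _ = ‖(3 : L)‖ ^ 4 := by rw [show (9 : L) = 3 ^ 2 by norm_num, norm_pow, ← pow_mul]
    _ < ‖(3 : L)‖ ^ 3 := pow_lt_pow_right_of_lt_one₀ (norm_pos_iff.2 h0) h1 (by decide)

lemma isCube_div_of_norm_sub_lt [CompleteSpace L] (h3 : ‖(3 : L)‖ = 1) {a b : L}
    (h : ‖a - b‖ < ‖b‖) : IsCube (a / b) := by
  have hb : b ≠ 0 := norm_pos_iff.1 ((norm_nonneg _).trans_lt h)
  refine isCube_of_norm_sub_one_lt h3 ?_
  rwa [div_sub_one hb, norm_div, div_lt_one (norm_pos_iff.2 hb)]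

lemma norm_eq_norm_of_add_eq {X Y Z : L} (h : X + Y = Z) (hne : ¬(X = 0 ∧ Y = 0 ∧ Z = 0)) :
    (X ≠ 0 ∧ ‖Y‖ = ‖X‖ ∧ ‖Z‖ ≤ ‖X‖) ∨ (X ≠ 0 ∧ ‖Z‖ = ‖X‖ ∧ ‖Y‖ ≤ ‖X‖) ∨
      (Y ≠ 0 ∧ ‖Z‖ = ‖Y‖ ∧ ‖X‖ ≤ ‖Y‖) := by
  subst h
  have hXY : ¬(X = 0 ∧ Y = 0) := fun ⟨hX, hY⟩ => hne ⟨hX, hY, by simp [hX, hY]⟩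
  rcases lt_trichotomy ‖X‖ ‖Y‖ with hlt | heq | hgt
  · refine .inr (.inr ⟨norm_pos_iff.1 ((norm_nonneg _).trans_lt hlt), ?_, hlt.le⟩)
    rw [IsUltrametricDist.norm_add_eq_max_of_norm_ne_norm hlt.ne, max_eq_right hlt.le]
  · refine .inl ⟨fun hX => hXY ⟨hX, ?_⟩, heq.symm, ultrametric_norm_add_le le_rfl heq.ge⟩
    rw [← norm_eq_zero, ← heq, hX, norm_zero]
  · refine .inr (.inl ⟨norm_pos_iff.1 ((norm_nonneg _).trans_lt hgt), ?_, hgt.le⟩)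
    rw [IsUltrametricDist.norm_add_eq_max_of_norm_ne_norm hgt.ne', max_eq_left hgt.le]

lemma norm_eq_norm_pow_three_of_cubicHasPoint {A α : L} (hA : ‖A‖ = 1) (hα : α ≠ 0)
    (h : CubicHasPoint A α) : ∃ t : L, ‖α‖ = ‖t‖ ^ 3 := by
  obtain ⟨x, y, z, hne, h⟩ := h
  have hA0 : A ≠ 0 := norm_ne_zero_iff.1 (hA ▸ one_ne_zero)
  have hα' : ‖α‖ ≠ 0 := norm_ne_zero_iff.2 hα
  rcases norm_eq_norm_of_add_eq h (by simpa [hα, hA0] using hne) with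
    ⟨h0, heq, -⟩ | ⟨h0, heq, -⟩ | ⟨h0, heq, -⟩
  all_goals simp only [norm_mul, norm_pow, norm_inv, hA, one_mul] at heq
  · have hx : ‖x‖ ≠ 0 := by simpa using right_ne_zero_of_mul h0
    have hy : ‖y‖ ≠ 0 := fun hy => by simp [hy, hα', hx] at heq
    refine ⟨α * x / y, ?_⟩
    rw [norm_div, norm_mul]
    field_simp at heq ⊢
    linear_combination heq
  · have hx : ‖x‖ ≠ 0 := by simpa using right_ne_zero_of_mul h0
    refine ⟨z / x, ?_⟩
    rw [norm_div]
    field_simp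
    exact heq.symm
  · have hy : ‖y‖ ≠ 0 := by simpa using right_ne_zero_of_mul h0
    have hz : ‖z‖ ≠ 0 := fun hz => by simp [hz, hα', hy] at heq
    refine ⟨y / z, ?_⟩
    rw [norm_div]
    field_simp at heq ⊢
    exact heq

-- Two of the three terms of the equation dominate the third, as the product of the three
-- coefficients is `A`; the quotient of these two is then a cube.
lemma cubicHasPoint_iff_of_norm_ne_pow_three [CompleteSpace L] (h3 : ‖(3 : L)‖ = 1) {A α : L}
    (hA0 : A ≠ 0) (hα : α ≠ 0) (hA : ∀ t : L, ‖A‖ ≠ ‖t‖ ^ 3) :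
    CubicHasPoint A α ↔ ∃ j : ℕ, IsCube (α * A ^ j) := by
  refine ⟨?_, fun ⟨j, hj⟩ => cubicHasPoint_of_isCube_mul_pow hA0 hα hj⟩
  rintro ⟨x, y, z, hne, h⟩
  have hnot := not_norm_eq_of_norm_ne_pow_three hA0 hα hA hne
  rcases norm_eq_norm_of_add_eq h (by simpa [hα, hA0] using hne) with
    ⟨h0, heq, hle⟩ | ⟨h0, heq, hle⟩ | ⟨h0, heq, hle⟩
  · have hlt : ‖A * z ^ 3‖ < ‖α * x ^ 3‖ := hle.lt_of_ne fun h => hnot ⟨heq, h⟩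
    have hY : α⁻¹ * y ^ 3 ≠ 0 := norm_ne_zero_iff.1 (heq ▸ norm_ne_zero_iff.2 h0)
    have hcube : IsCube (-α * x ^ 3 / (α⁻¹ * y ^ 3)) := by
      refine isCube_div_of_norm_sub_lt h3 ?_
      rwa [heq, neg_mul, ← neg_add', norm_neg, h]
    have := (hcube.of_mul_pow_three_div (by aesop) (by aesop)).neg
    exact ⟨0, by simpa using isCube_of_isCube_sq (by simpa [sq] using this)⟩
  · have hlt : ‖α⁻¹ * y ^ 3‖ < ‖α * x ^ 3‖ := hle.lt_of_ne fun h => hnot ⟨h, heq⟩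
    have hZ : A * z ^ 3 ≠ 0 := norm_ne_zero_iff.1 (heq ▸ norm_ne_zero_iff.2 h0)
    have hcube : IsCube (α * x ^ 3 / (A * z ^ 3)) := by
      refine isCube_div_of_norm_sub_lt h3 ?_
      rwa [heq, ← h, sub_add_cancel_left, norm_neg]
    have := hcube.of_mul_pow_three_div (by aesop) (by aesop)
    refine ⟨2, ?_⟩
    rw [show α * A ^ 2 = A ^ 3 * (α / A) by field_simp]
    exact (IsCube.pow_three A).mul this
  · have hlt : ‖α * x ^ 3‖ < ‖α⁻¹ * y ^ 3‖ := hle.lt_of_ne fun h => hnot ⟨h.symm, heq.trans h.symm⟩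
    have hZ : A * z ^ 3 ≠ 0 := norm_ne_zero_iff.1 (heq ▸ norm_ne_zero_iff.2 h0)
    have hcube : IsCube (A * z ^ 3 / (α⁻¹ * y ^ 3)) := by
      refine isCube_div_of_norm_sub_lt h3 ?_
      rwa [← h, add_sub_cancel_right]
    have := hcube.of_mul_pow_three_div (by aesop) (by aesop)
    exact ⟨1, by simpa [mul_comm] using this⟩

lemma exists_mul_pow_three_add_eq_zero [CompleteSpace L] (h3 : ‖(3 : L)‖ = 1) {a x w : L}
    (h : ‖a * x ^ 3 + w‖ < ‖a * x ^ 3‖) : ∃ t ≠ 0, a * t ^ 3 + w = 0 := by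
  obtain ⟨s, hs⟩ := isCube_div_of_norm_sub_lt h3 (a := -w) (b := a * x ^ 3)
    (by rwa [← neg_add', norm_neg, add_comm])
  have hax : a * x ^ 3 ≠ 0 := norm_pos_iff.1 ((norm_nonneg _).trans_lt h)
  rw [div_eq_iff hax] at hs
  have hx : x ≠ 0 := fun hx => hax (by simp [hx])
  have hs0 : s ≠ 0 := by
    rintro rfl
    rw [zero_pow three_ne_zero, zero_mul, neg_eq_zero] at hs
    simp [hs] at h
  exact ⟨s * x, mul_ne_zero hs0 hx, by linear_combination -hs⟩

lemma exists_diagonal_cubic_eq_zero_of_norm_lt [CompleteSpace L] (h3 : ‖(3 : L)‖ = 1)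
    {a b c x y z : L}
    (h : ‖a * x ^ 3 + b * y ^ 3 + c * z ^ 3‖ <
      max (max ‖a * x ^ 3‖ ‖b * y ^ 3‖) ‖c * z ^ 3‖) :
    ∃ x y z : L, ¬(x = 0 ∧ y = 0 ∧ z = 0) ∧ a * x ^ 3 + b * y ^ 3 + c * z ^ 3 = 0 := by
  rcases lt_max_iff.1 h with h | h
  · rcases lt_max_iff.1 h with h | h
    · rw [add_assoc] at h
      obtain ⟨t, ht0, ht⟩ := exists_mul_pow_three_add_eq_zero h3 h
      exact ⟨t, y, z, by simp [ht0], by rw [add_assoc, ht]⟩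
    · rw [add_comm (a * x ^ 3), add_assoc] at h
      obtain ⟨t, ht0, ht⟩ := exists_mul_pow_three_add_eq_zero h3 h
      exact ⟨x, t, z, by simp [ht0], by linear_combination ht⟩
  · rw [add_comm] at h
    obtain ⟨t, ht0, ht⟩ := exists_mul_pow_three_add_eq_zero h3 h
    exact ⟨x, y, t, by simp [ht0], by linear_combination ht⟩

lemma norm_pow_sub_pow_le {x y : L} (hx : ‖x‖ ≤ 1) (hy : ‖y‖ ≤ 1) (n : ℕ) :
    ‖x ^ n - y ^ n‖ ≤ ‖x - y‖ := by
  induction n with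
  | zero => simp
  | succ n ih =>
    rw [show x ^ (n + 1) - y ^ (n + 1) = x * (x ^ n - y ^ n) + (x - y) * y ^ n by ring]
    refine ultrametric_norm_add_le ?_ ?_
    · rw [norm_mul]
      exact (mul_le_of_le_one_left (norm_nonneg _) hx).trans ih
    · rw [norm_mul, norm_pow]
      exact mul_le_of_le_one_right (norm_nonneg _) (pow_le_one₀ (norm_nonneg _) hy)

lemma norm_intCast_mul_le (n : ℤ) (x : L) : ‖(n : L) * x‖ ≤ ‖x‖ := by
  rw [norm_mul]
  exact mul_le_of_le_one_left (norm_nonneg x) (IsUltrametricDist.norm_intCast_le_one L n)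

lemma norm_intCast_eq_one_of_not_dvd {p : ℕ} (hp : p.Prime) (hpL : ‖(p : L)‖ < 1) {n : ℤ}
    (hn : ¬(p : ℤ) ∣ n) : ‖(n : L)‖ = 1 := by
  refine (IsUltrametricDist.norm_intCast_le_one L n).antisymm (not_lt.1 fun hlt => ?_)
  obtain ⟨u, v, huv⟩ := (Nat.prime_iff_prime_int.1 hp).coprime_iff_not_dvd.2 hn
  have hone : (u : L) * p + v * n = 1 := by exact_mod_cast congrArg (Int.cast : ℤ → L) huv
  have := (IsUltrametricDist.norm_add_le_max _ _).trans_lt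
    (max_lt ((norm_intCast_mul_le u _).trans_lt hpL) ((norm_intCast_mul_le v _).trans_lt hlt))
  rw [hone, norm_one] at this
  exact lt_irrefl 1 this

lemma pow_succ_dvd_of_norm_intCast_lt {p : ℕ} (hp : p.Prime) (hpL : ‖(p : L)‖ < 1) {n : ℤ}
    {k : ℕ} (hn : ‖(n : L)‖ < ‖(p : L)‖ ^ k) : (p : ℤ) ^ (k + 1) ∣ n := by
  obtain rfl | hn0 := eq_or_ne n 0
  · exact dvd_zero _
  obtain ⟨j, u, hu, rfl⟩ :=
    WfDvdMonoid.max_power_factor hn0 (Nat.prime_iff_prime_int.1 hp).irreducible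
  rw [Int.cast_mul, Int.cast_pow, norm_mul, norm_pow, norm_intCast_eq_one_of_not_dvd hp hpL hu,
    mul_one, Int.cast_natCast] at hn
  have hkj : k < j := lt_of_not_ge fun h =>
    hn.not_ge (pow_le_pow_of_le_one (norm_nonneg _) hpL.le h)
  exact (pow_dvd_pow _ hkj).mul_right u

lemma norm_three_eq_one {p : ℕ} (hp : p.Prime) (hp3 : p ≠ 3) (hpL : ‖(p : L)‖ < 1) :
    ‖(3 : L)‖ = 1 := by
  have h3 : ¬(p : ℤ) ∣ 3 := mod_cast (Nat.prime_dvd_prime_iff_eq hp Nat.prime_three).not.2 hp3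
  exact_mod_cast norm_intCast_eq_one_of_not_dvd hp hpL h3

lemma isCube_intCast [CompleteSpace L] {p : ℕ} (hp : p.Prime) (hp3 : p % 3 = 2)
    (hpL : ‖(p : L)‖ < 1) {n : ℤ} (hn : ¬(p : ℤ) ∣ n) : IsCube (n : L) := by
  have h3 : ‖(3 : L)‖ = 1 := norm_three_eq_one hp (by lia) hpL
  have hfermat : IsCube ((n : L) ^ (p - 1)) := by
    refine isCube_of_norm_sub_one_lt h3 ?_
    obtain ⟨m, hm⟩ := (Int.ModEq.pow_card_sub_one_eq_one hp
      ((Nat.prime_iff_prime_int.1 hp).coprime_iff_not_dvd.2 hn).symm).symm.dvd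
    have hm' : (n : L) ^ (p - 1) - 1 = p * m := by exact_mod_cast congrArg (Int.cast : ℤ → L) hm
    rw [hm', mul_comm]
    exact (norm_intCast_mul_le m _).trans_lt hpL
  have hn0 : (n : L) ≠ 0 := norm_ne_zero_iff.1
    (norm_intCast_eq_one_of_not_dvd hp hpL hn ▸ one_ne_zero)
  have hsq : (n : L) ^ 2 = ((n : L) ^ ((p + 1) / 3)) ^ 3 / (n : L) ^ (p - 1) := by
    rw [← pow_mul, Nat.div_mul_cancel (by lia), eq_div_iff (pow_ne_zero _ hn0), ← pow_add]
    congr 1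
    have := hp.pos
    lia
  exact isCube_of_isCube_sq (hsq ▸ (IsCube.pow_three _).div hfermat)

end Ultrametric

section FiniteField

lemma isCube_mul_pow_of_not_isCube {G : Type*} [CommGroup G] [IsCyclic G] {g : G}
    (hg : ¬IsCube g) (t : G) : IsCube t ∨ IsCube (t * g) ∨ IsCube (t * g ^ 2) := by
  obtain ⟨ω, hω⟩ := IsCyclic.exists_generator (α := G)
  obtain ⟨i, rfl⟩ := Subgroup.mem_zpowers_iff.1 (hω g)
  obtain ⟨j, rfl⟩ := Subgroup.mem_zpowers_iff.1 (hω t)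
  have hcube {n : ℤ} (hn : 3 ∣ n) : IsCube (ω ^ n) := by
    obtain ⟨m, rfl⟩ := hn
    exact ⟨ω ^ m, by rw [mul_comm, zpow_mul, zpow_ofNat]⟩
  have hi : ¬3 ∣ i := fun h => hg (hcube h)
  rw [← zpow_add, ← zpow_natCast, ← zpow_mul, ← zpow_add]
  have hi' : i % 3 = 1 ∨ i % 3 = 2 := by lia
  have hj : 3 ∣ j ∨ 3 ∣ j + i ∨ 3 ∣ j + i * (2 : ℕ) := by
    rcases hi' with hi' | hi' <;> lia
  rcases hj with h | h | h
  exacts [.inl (hcube h), .inr (.inl (hcube h)), .inr (.inr (hcube h))]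

variable {F : Type*} [Field F]

lemma isCube_units_iff {u : Fˣ} : IsCube (u : F) ↔ IsCube u := by
  refine ⟨fun ⟨r, hr⟩ => ?_, fun h => h.map (Units.coeHom F)⟩
  have hr0 : r ≠ 0 := by
    rintro rfl
    simp at hr
  exact ⟨Units.mk0 r hr0, Units.ext (by simpa using hr)⟩

lemma isCube_mul_pow_of_not_isCube₀ [Finite F] {g t : F} (hg : ¬IsCube g) (ht : t ≠ 0) :
    IsCube t ∨ IsCube (t * g) ∨ IsCube (t * g ^ 2) := by
  have hg0 : g ≠ 0 := fun h => hg ⟨0, by simp [h]⟩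
  lift g to Fˣ using hg0.isUnit
  lift t to Fˣ using ht.isUnit
  have := isCube_mul_pow_of_not_isCube (isCube_units_iff.not.1 hg) t
  simpa only [← isCube_units_iff, Units.val_mul, Units.val_pow_eq_pow_val] using this

open Classical in
/-- If `g` is not a cube and `x³ + g y³ + g² z³ = 0` has only the trivial solution, this is an
injective self-map of the nonzero cubes `h` missing `-1`, which is absurd over a finite field. With
`t = g * h`, it sends `h` to whichever of `-1 - t` and `-1 - t⁻¹` is a cube. -/
noncomputable def cubeTwist (g h : F) : F :=
  if IsCube (g * h + 1) then -(g * h + 1) else -((g * h)⁻¹ + 1)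

lemma cubeTwist_injOn {g : F} (hg : ¬IsCube g) :
    Set.InjOn (cubeTwist g) {h | h ≠ 0 ∧ IsCube h} := by
  have hg0 : g ≠ 0 := fun h => hg ⟨0, by simp [h]⟩
  have hmixed {s t : F} (hs0 : s ≠ 0) (hs : IsCube s) (ht0 : t ≠ 0) (ht : IsCube t) :
      g * s ≠ (g * t)⁻¹ := by
    intro h
    have hsq : g ^ 2 = 1 ^ 3 / (s * t) := by
      rw [← mul_eq_one_iff_eq_inv₀ (mul_ne_zero hg0 ht0)] at h
      rw [eq_div_iff (mul_ne_zero hs0 ht0)]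
      linear_combination h
    exact hg (isCube_of_isCube_sq (hsq ▸ (IsCube.pow_three 1).div (hs.mul ht)))
  rintro s ⟨hs0, hs⟩ t ⟨ht0, ht⟩ hst
  unfold cubeTwist at hst
  split_ifs at hst <;> rw [neg_inj, add_left_inj] at hst
  · exact mul_left_cancel₀ hg0 hst
  · exact absurd hst (hmixed hs0 hs ht0 ht)
  · exact absurd hst.symm (hmixed ht0 ht hs0 hs)
  · exact mul_left_cancel₀ hg0 (inv_injective hst)

lemma cubeTwist_mem [Finite F] {g h : F} (hg : ¬IsCube g) (hh0 : h ≠ 0) (hh : IsCube h)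
    (hno : ¬IsCube ((g * h + 1) * g)) :
    cubeTwist g h ≠ -1 ∧ cubeTwist g h ≠ 0 ∧ IsCube (cubeTwist g h) := by
  have hgh : g * h ≠ 0 := mul_ne_zero (fun h => hg ⟨0, by simp [h]⟩) hh0
  have hne : g * h + 1 ≠ 0 := fun h0 => hno (by rw [h0, zero_mul]; exact ⟨0, by simp⟩)
  unfold cubeTwist
  split_ifs with hcube
  · exact ⟨by simpa [and_comm] using hgh, neg_ne_zero.2 hne, hcube.neg⟩
  · have hinv : (g * h)⁻¹ + 1 = (g * h + 1) * g ^ 2 / (g ^ 3 * h) := by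
      have := left_ne_zero_of_mul hgh
      field_simp
      ring
    have hcube' : IsCube ((g * h + 1) * g ^ 2) := by
      simpa [hcube, hno] using isCube_mul_pow_of_not_isCube₀ hg hne
    refine ⟨by simpa [and_comm] using hgh, neg_ne_zero.2 ?_, ?_⟩
    · rw [hinv]
      simp_all
    · rw [hinv]
      exact (hcube'.div ((IsCube.pow_three g).mul hh)).neg

lemma exists_pow_three_add_mul_pow_three_eq_zero [Finite F] {g : F} (hg : ¬IsCube g) :
    ∃ x y z : F, ¬(x = 0 ∧ y = 0 ∧ z = 0) ∧ x ^ 3 + g * y ^ 3 + g ^ 2 * z ^ 3 = 0 := by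
  obtain ⟨h, hh0, ⟨p, rfl⟩, r, hr⟩ :
      ∃ h : F, h ≠ 0 ∧ IsCube h ∧ IsCube ((g * h + 1) * g) := by
    by_contra! hno
    have hmem (h : F) (hh : h ≠ 0 ∧ IsCube h) := cubeTwist_mem hg hh.1 hh.2 (hno h hh.1 hh.2)
    have hmaps : Set.MapsTo (cubeTwist g) {h | h ≠ 0 ∧ IsCube h} {h | h ≠ 0 ∧ IsCube h} :=
      fun h hh => (hmem h hh).2
    have hsurj := Finite.surjective_of_injective (hmaps.restrict_inj.2 (cubeTwist_injOn hg))
    obtain ⟨⟨h, hh⟩, hneg⟩ := hsurj ⟨-1, by simp, -1, by norm_num⟩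
    exact (hmem h hh).1 (congrArg Subtype.val hneg)
  exact ⟨-r, 1, p, by simp, by linear_combination hr⟩

lemma exists_diagonal_cubic_eq_zero [Finite F] {a b c : F} (ha : a ≠ 0) (hb : b ≠ 0) (hc : c ≠ 0) :
    ∃ x y z : F, ¬(x = 0 ∧ y = 0 ∧ z = 0) ∧ a * x ^ 3 + b * y ^ 3 + c * z ^ 3 = 0 := by
  by_cases hg : IsCube (b / a)
  · obtain ⟨r, hr⟩ := hg
    rw [div_eq_iff ha] at hr
    exact ⟨-r, 1, 0, by simp, by linear_combination hr⟩
  rcases isCube_mul_pow_of_not_isCube₀ hg (div_ne_zero hc ha) with ⟨r, hr⟩ | ⟨r, hr⟩ | ⟨r, hr⟩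
  · rw [div_eq_iff ha] at hr
    exact ⟨-r, 0, 1, by simp, by linear_combination hr⟩
  · obtain ⟨x, y, z, hne, h⟩ := exists_pow_three_add_mul_pow_three_eq_zero hg
    have hr0 : r ≠ 0 := by
      rintro rfl
      simp [ha, hb, hc] at hr
    refine ⟨x, y, b / a * z / r, by simpa [ha, hb, hr0] using hne, ?_⟩
    field_simp at hr h ⊢
    linear_combination a ^ 2 * r ^ 3 * h + b ^ 2 * z ^ 3 * hr
  · refine ⟨0, -r * a / b, 1, by simp, ?_⟩
    field_simp at hr ⊢
    linear_combination hr

lemma pow_three_eq_one_of_pow_nine_eq_one [Finite F] (hF : ¬9 ∣ Nat.card F - 1) {x : F}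
    (hx : x ^ 9 = 1) : x ^ 3 = 1 := by
  have hx0 : x ≠ 0 := by
    rintro rfl
    simp at hx
  have hcard : orderOf x ∣ Nat.card F - 1 := by
    have _ := Fintype.ofFinite F
    rw [Nat.card_eq_fintype_card]
    exact orderOf_dvd_of_pow_eq_one (FiniteField.pow_card_sub_one_eq_one x hx0)
  have h9 : orderOf x ∣ 3 ^ 2 := orderOf_dvd_of_pow_eq_one hx
  obtain ⟨k, hk, hord⟩ := (Nat.dvd_prime_pow Nat.prime_three).1 h9
  have hk2 : k ≠ 2 := by
    rintro rfl
    exact hF (by rwa [hord] at hcard)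
  exact orderOf_dvd_iff_pow_eq_one.1 (hord ▸ pow_dvd_pow 3 (by lia : k ≤ 1))

end FiniteField

lemma eq_one_of_pow_three_eq_one_of_dvd_sub_one {R : Type*} [CommRing R] [IsDomain R] {q v : R}
    (hv : v ^ 3 = 1) (h3 : ¬q ∣ 3) (h : q ∣ v - 1) : v = 1 := by
  by_contra hne
  have hroot : v ^ 2 + v + 1 = 0 :=
    mul_left_cancel₀ (sub_ne_zero.2 hne) (by linear_combination hv)
  obtain ⟨c, hc⟩ := h
  exact h3 ⟨-(v + 2) * c, by linear_combination hroot - (v + 2) * hc⟩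

section Completion

variable {K : Type*} [Field K] [NumberField K] {q : 𝓞 K} (hq : Prime q)

/-- The completion `k_q` of a number field at a prime element `q` of its ring of integers. -/
abbrev CompletionAt : Type _ := (primeSpec hq).adicCompletion K

lemma norm_algebraMap_le_one (x : 𝓞 K) : ‖algebraMap (𝓞 K) (CompletionAt hq) x‖ ≤ 1 :=
  FinitePlace.norm_le_one K (primeSpec hq) x

lemma norm_algebraMap_lt_one_iff {x : 𝓞 K} :
    ‖algebraMap (𝓞 K) (CompletionAt hq) x‖ < 1 ↔ q ∣ x :=
  (FinitePlace.norm_lt_one_iff_mem K (primeSpec hq) x).trans Ideal.mem_span_singleton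

lemma norm_algebraMap_eq_one_iff {x : 𝓞 K} :
    ‖algebraMap (𝓞 K) (CompletionAt hq) x‖ = 1 ↔ ¬q ∣ x := by
  rw [← norm_algebraMap_lt_one_iff hq, not_lt, (norm_algebraMap_le_one hq x).ge_iff_eq]

lemma norm_algebraMap_le_norm_algebraMap_iff {x y : K} :
    ‖algebraMap K (CompletionAt hq) x‖ ≤ ‖algebraMap K (CompletionAt hq) y‖ ↔
      (primeSpec hq).valuation K x ≤ (primeSpec hq).valuation K y := by
  change ‖FinitePlace.embedding _ x‖ ≤ ‖FinitePlace.embedding _ y‖ ↔ _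
  rw [FinitePlace.norm_embedding', FinitePlace.norm_embedding', NNReal.coe_le_coe]
  exact (WithZeroMulInt.toNNReal_strictMono
    (HeightOneSpectrum.one_lt_absNorm_nnreal (primeSpec hq))).le_iff_le

lemma algebraMap_completionAt_ne_zero {x : 𝓞 K} (hx : x ≠ 0) :
    algebraMap (𝓞 K) (CompletionAt hq) x ≠ 0 :=
  (map_ne_zero_iff _ (FaithfulSMul.algebraMap_injective _ _)).2 hx

lemma exists_norm_sub_algebraMap_lt (x : CompletionAt hq) {ε : ℝ} (hε : 0 < ε) :
    ∃ y : K, ‖x - algebraMap K (CompletionAt hq) y‖ < ε := by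
  obtain ⟨y, hy⟩ := Metric.denseRange_iff.1
    (HeightOneSpectrum.denseRange_algebraMap K (primeSpec hq)) x ε hε
  exact ⟨y, by rwa [← dist_eq_norm]⟩

lemma exists_norm_sub_algebraMap_le {x : CompletionAt hq} (hx : ‖x‖ ≤ 1) {c : 𝓞 K} (hc : c ≠ 0) :
    ∃ r : 𝓞 K, ‖x - algebraMap (𝓞 K) (CompletionAt hq) r‖ ≤
      ‖algebraMap (𝓞 K) (CompletionAt hq) c‖ := by
  obtain ⟨y, hy⟩ := exists_norm_sub_algebraMap_lt hq x
    (norm_pos_iff.2 (algebraMap_completionAt_ne_zero hq hc))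
  have hy1 : (primeSpec hq).valuation K y ≤ 1 := by
    rw [← map_one ((primeSpec hq).valuation K), ← norm_algebraMap_le_norm_algebraMap_iff hq,
      map_one, norm_one, ← sub_sub_cancel x (algebraMap K _ y)]
    exact ultrametric_norm_sub_le hx (hy.le.trans (norm_algebraMap_le_one hq c))
  have hc0 : (primeSpec hq).valuation K (c : K) ≠ 0 := by simpa using hc
  obtain ⟨r, hr⟩ := HeightOneSpectrum.exists_valuation_sub_lt_of_integer (primeSpec hq) hy1
    (Units.mk0 _ hc0)
  refine ⟨r, ?_⟩
  have hr' := (norm_algebraMap_le_norm_algebraMap_iff hq).2 hr.le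
  rw [map_sub] at hr'
  have := ultrametric_norm_sub_le hy.le hr'
  rwa [sub_sub_eq_add_sub, sub_add_cancel] at this

lemma exists_norm_algebraMap_eq_pow {x : 𝓞 K} (hx : x ≠ 0) : ∃ n : ℕ,
    ‖algebraMap (𝓞 K) (CompletionAt hq) x‖ = ‖algebraMap (𝓞 K) (CompletionAt hq) q‖ ^ n := by
  obtain ⟨n, u, hu, rfl⟩ := WfDvdMonoid.max_power_factor hx hq.irreducible
  exact ⟨n, by simp [(norm_algebraMap_eq_one_iff hq).2 hu]⟩

lemma exists_norm_eq_zpow {x : CompletionAt hq} (hx : x ≠ 0) :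
    ∃ n : ℤ, ‖x‖ = ‖algebraMap (𝓞 K) (CompletionAt hq) q‖ ^ n := by
  obtain ⟨y, hy⟩ := exists_norm_sub_algebraMap_lt hq x (norm_pos_iff.2 hx)
  have hxy : ‖x‖ = ‖algebraMap K (CompletionAt hq) y‖ := by
    rw [← norm_neg (algebraMap K _ y)]
    exact IsUltrametricDist.norm_eq_of_add_norm_lt_max
      (lt_max_of_lt_left (by rwa [← sub_eq_add_neg]))
  obtain ⟨a, b, hb, rfl⟩ := IsFractionRing.div_surjective (A := 𝓞 K) y
  have ha : a ≠ 0 := by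
    rintro rfl
    simp [hx] at hxy
  obtain ⟨i, hi⟩ := exists_norm_algebraMap_eq_pow hq ha
  obtain ⟨j, hj⟩ := exists_norm_algebraMap_eq_pow hq (nonZeroDivisors.ne_zero hb)
  have hq0 := algebraMap_completionAt_ne_zero hq hq.ne_zero
  refine ⟨i - j, ?_⟩
  rw [zpow_sub₀ (norm_ne_zero_iff.2 hq0), zpow_natCast, zpow_natCast, ← hi, ← hj, hxy, map_div₀,
    norm_div]
  rfl

lemma three_dvd_of_norm_pow_eq {x : CompletionAt hq} {n : ℕ}
    (h : ‖algebraMap (𝓞 K) (CompletionAt hq) q‖ ^ n = ‖x‖ ^ 3) : 3 ∣ n := by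
  have hq0 := norm_pos_iff.2 (algebraMap_completionAt_ne_zero hq hq.ne_zero)
  have hx : x ≠ 0 := by
    rintro rfl
    simp [hq0.ne'] at h
  obtain ⟨m, hm⟩ := exists_norm_eq_zpow hq hx
  rw [hm, ← zpow_natCast, ← zpow_natCast, ← zpow_mul] at h
  have := zpow_right_injective₀ hq0 ((norm_algebraMap_lt_one_iff hq).2 dvd_rfl).ne h
  lia

lemma exists_dvd_diagonal_cubic (hq : Prime q) {a b c : 𝓞 K} (ha : ¬q ∣ a) (hb : ¬q ∣ b)
    (hc : ¬q ∣ c) :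
    ∃ x y z : 𝓞 K, ¬(q ∣ x ∧ q ∣ y ∧ q ∣ z) ∧ q ∣ a * x ^ 3 + b * y ^ 3 + c * z ^ 3 := by
  let I : Ideal (𝓞 K) := (primeSpec hq).asIdeal
  let _ := Ideal.Quotient.field I
  have _ := Ideal.finiteQuotientOfFreeOfNeBot I (primeSpec hq).ne_bot
  have hmk {x : 𝓞 K} : Ideal.Quotient.mk I x = 0 ↔ q ∣ x :=
    Ideal.Quotient.eq_zero_iff_mem.trans Ideal.mem_span_singleton
  obtain ⟨x, y, z, hne, h⟩ :=
    exists_diagonal_cubic_eq_zero (mt hmk.1 ha) (mt hmk.1 hb) (mt hmk.1 hc)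
  obtain ⟨x, rfl⟩ := Ideal.Quotient.mk_surjective x
  obtain ⟨y, rfl⟩ := Ideal.Quotient.mk_surjective y
  obtain ⟨z, rfl⟩ := Ideal.Quotient.mk_surjective z
  simp only [hmk] at hne
  exact ⟨x, y, z, hne, hmk.1 (by simpa only [map_add, map_mul, map_pow] using h)⟩

lemma exists_diagonal_cubic_eq_zero_of_not_dvd (h3 : ¬q ∣ 3) {a b c : 𝓞 K} (ha : ¬q ∣ a)
    (hb : ¬q ∣ b) (hc : ¬q ∣ c) :
    ∃ x y z : CompletionAt hq, ¬(x = 0 ∧ y = 0 ∧ z = 0) ∧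
      algebraMap (𝓞 K) (CompletionAt hq) a * x ^ 3 +
        algebraMap (𝓞 K) (CompletionAt hq) b * y ^ 3 +
        algebraMap (𝓞 K) (CompletionAt hq) c * z ^ 3 = 0 := by
  let φ := algebraMap (𝓞 K) (CompletionAt hq)
  obtain ⟨x, y, z, hne, hdvd⟩ := exists_dvd_diagonal_cubic hq ha hb hc
  have hterm {a x : 𝓞 K} (ha : ¬q ∣ a) (hx : ¬q ∣ x) : ‖φ (a * x ^ 3)‖ = 1 :=
    (norm_algebraMap_eq_one_iff hq).2 (hq.not_dvd_mul ha (mt hq.dvd_of_dvd_pow hx))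
  have hmax : 1 ≤ max (max ‖φ (a * x ^ 3)‖ ‖φ (b * y ^ 3)‖) ‖φ (c * z ^ 3)‖ := by
    simp only [le_max_iff]
    by_cases hx : q ∣ x
    · by_cases hy : q ∣ y
      · exact .inr (hterm hc fun hz => hne ⟨hx, hy, hz⟩).ge
      · exact .inl (.inr (hterm hb hy).ge)
    · exact .inl (.inl (hterm ha hx).ge)
  have h3' : ‖(3 : CompletionAt hq)‖ = 1 := by
    simpa only [map_ofNat] using (norm_algebraMap_eq_one_iff hq).2 h3
  have hlt := ((norm_algebraMap_lt_one_iff hq).2 hdvd).trans_le hmax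
  simp only [φ, map_add, map_mul, map_pow] at hlt
  exact exists_diagonal_cubic_eq_zero_of_norm_lt h3' hlt

lemma cubicHasPoint_of_not_dvd (h3 : ¬q ∣ 3) {A α : 𝓞 K} (hA : ¬q ∣ A) (hα : ¬q ∣ α) :
    CubicHasPoint (algebraMap (𝓞 K) (CompletionAt hq) A)
      (algebraMap (𝓞 K) (CompletionAt hq) α) := by
  have hα0 : algebraMap (𝓞 K) (CompletionAt hq) α ≠ 0 :=
    algebraMap_completionAt_ne_zero hq fun h => hα (h ▸ dvd_zero q)
  have hAα : ¬q ∣ -(A * α) := by simpa [hq.dvd_mul] using ⟨hA, hα⟩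
  obtain ⟨x, y, z, hne, h⟩ := exists_diagonal_cubic_eq_zero_of_not_dvd hq h3
    (mt hq.dvd_of_dvd_pow hα : ¬q ∣ α ^ 2) hq.not_dvd_one hAα
  simp only [map_neg, map_mul, map_pow, map_one] at h
  refine ⟨x, y, z, hne, mul_left_cancel₀ hα0 ?_⟩
  field_simp
  linear_combination h

lemma eq_one_of_isCube_of_pow_three_eq_one {v : 𝓞 K} (hv : v ^ 3 = 1) (h3 : ¬q ∣ 3)
    (hN : ¬9 ∣ Nat.card (𝓞 K ⧸ Ideal.span {q}) - 1)
    (h : IsCube (algebraMap (𝓞 K) (CompletionAt hq) v)) : v = 1 := by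
  obtain ⟨w, hw⟩ := h
  let I : Ideal (𝓞 K) := (primeSpec hq).asIdeal
  let _ := Ideal.Quotient.field I
  have _ := Ideal.finiteQuotientOfFreeOfNeBot I (primeSpec hq).ne_bot
  have hw9 : w ^ 9 = 1 := by
    rw [pow_mul w 3 3, ← hw, ← map_pow, hv, map_one]
  have hw1 : ‖w‖ = 1 := by
    rw [← pow_eq_one_iff_of_nonneg (norm_nonneg w) (n := 9) (by decide), ← norm_pow, hw9, norm_one]
  obtain ⟨X, hX⟩ := exists_norm_sub_algebraMap_le hq hw1.le hq.ne_zero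
  have hcongr (n : ℕ) {y : 𝓞 K} (hy : algebraMap (𝓞 K) (CompletionAt hq) y = w ^ n) :
      Ideal.Quotient.mk I X ^ n = Ideal.Quotient.mk I y := by
    rw [← map_pow, Ideal.Quotient.eq]
    refine Ideal.mem_span_singleton.2 ((norm_algebraMap_lt_one_iff hq).1 ?_)
    rw [map_sub, map_pow, hy, norm_sub_rev]
    exact (norm_pow_sub_pow_le hw1.le (norm_algebraMap_le_one hq X) n).trans_lt
      (hX.trans_lt ((norm_algebraMap_lt_one_iff hq).2 dvd_rfl))
  have hX9 : Ideal.Quotient.mk I X ^ 9 = 1 := hcongr 9 (by rw [hw9, map_one])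
  have hX3 := pow_three_eq_one_of_pow_nine_eq_one (F := 𝓞 K ⧸ I) hN hX9
  rw [hcongr 3 hw, ← map_one (Ideal.Quotient.mk I), Ideal.Quotient.eq] at hX3
  exact eq_one_of_pow_three_eq_one_of_dvd_sub_one hv h3 (Ideal.mem_span_singleton.1 hX3)

lemma isCube_mul_pow_iff {u : CompletionAt hq} (hu : ‖u‖ = 1) {n : ℕ} :
    IsCube (u * algebraMap (𝓞 K) (CompletionAt hq) q ^ n) ↔ IsCube u ∧ 3 ∣ n := by
  have hcube (k : ℕ) : IsCube (algebraMap (𝓞 K) (CompletionAt hq) q ^ (3 * k)) :=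
    ⟨algebraMap (𝓞 K) (CompletionAt hq) q ^ k, by rw [mul_comm, pow_mul]⟩
  have hq0 (k : ℕ) := pow_ne_zero k (algebraMap_completionAt_ne_zero hq hq.ne_zero)
  refine ⟨fun h => ?_, ?_⟩
  · obtain ⟨k, rfl⟩ : 3 ∣ n := by
      obtain ⟨r, hr⟩ := h
      apply three_dvd_of_norm_pow_eq hq (x := r)
      rw [← norm_pow, ← norm_pow, ← hr, norm_mul, hu, one_mul]
    rw [mul_comm, isCube_mul_left_iff (hcube k) (hq0 _)] at h
    exact ⟨h, dvd_mul_right 3 k⟩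
  · rintro ⟨hu, k, rfl⟩
    exact hu.mul (hcube k)

-- With `ϖ` the image of `q`, `α A ^ j` is `u ϖ ^ (e + 2 j)` up to a cube, and `j = e` makes the
-- exponent a multiple of `3`.
lemma cubicHasPoint_sq_mul_iff (h3 : ¬q ∣ 3) {u c : CompletionAt hq} (hu : ‖u‖ = 1)
    (hc1 : ‖c‖ = 1) (hc : IsCube c) (e : ℕ) :
    CubicHasPoint (algebraMap (𝓞 K) (CompletionAt hq) q ^ 2 * c)
      (u * algebraMap (𝓞 K) (CompletionAt hq) q ^ e) ↔ IsCube u := by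
  set ϖ := algebraMap (𝓞 K) (CompletionAt hq) q
  have hϖ0 : ϖ ≠ 0 := algebraMap_completionAt_ne_zero hq hq.ne_zero
  have hc0 : c ≠ 0 := norm_ne_zero_iff.1 (hc1 ▸ one_ne_zero)
  have hu0 : u ≠ 0 := norm_ne_zero_iff.1 (hu ▸ one_ne_zero)
  have h3L : ‖(3 : CompletionAt hq)‖ = 1 := by
    simpa only [map_ofNat] using (norm_algebraMap_eq_one_iff hq).2 h3
  have hA (t : CompletionAt hq) : ‖ϖ ^ 2 * c‖ ≠ ‖t‖ ^ 3 := by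
    rw [norm_mul, norm_pow, hc1, mul_one]
    exact fun h => absurd (three_dvd_of_norm_pow_eq hq h) (by decide)
  rw [cubicHasPoint_iff_of_norm_ne_pow_three h3L (mul_ne_zero (pow_ne_zero 2 hϖ0) hc0)
    (mul_ne_zero hu0 (pow_ne_zero e hϖ0)) hA]
  have hiff (j : ℕ) : IsCube (u * ϖ ^ e * (ϖ ^ 2 * c) ^ j) ↔ IsCube u ∧ 3 ∣ e + 2 * j := by
    rw [show u * ϖ ^ e * (ϖ ^ 2 * c) ^ j = c ^ j * (u * ϖ ^ (e + 2 * j)) by ring,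
      isCube_mul_left_iff (hc.pow j) (pow_ne_zero j hc0), isCube_mul_pow_iff hq hu]
  simp only [hiff]
  exact ⟨fun ⟨_, h, _⟩ => h, fun h => ⟨e, h, e, by ring⟩⟩

lemma cubicHasPoint_iff_eq_one_of_prime {p : ℕ} (hp : p.Prime) (hp3 : p % 3 = 2)
    (hpK : Prime (p : 𝓞 K)) (hN : ¬9 ∣ Nat.card (𝓞 K ⧸ Ideal.span {(p : 𝓞 K)}) - 1)
    {v : 𝓞 K} (hv : v ^ 3 = 1) {c n : ℤ} (hc : ¬(p : ℤ) ∣ c) (hn : ¬(p : ℤ) ∣ n) (e : ℕ) :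
    CubicHasPoint (algebraMap (𝓞 K) (CompletionAt hpK) (p ^ 2 * c))
      (algebraMap (𝓞 K) (CompletionAt hpK) (v * n * p ^ e)) ↔ v = 1 := by
  let φ := algebraMap (𝓞 K) (CompletionAt hpK)
  have hpL : ‖(p : CompletionAt hpK)‖ < 1 := by
    simpa only [map_natCast] using (norm_algebraMap_lt_one_iff hpK).2 dvd_rfl
  have h3 : ¬(p : 𝓞 K) ∣ 3 := by
    rw [← norm_algebraMap_eq_one_iff hpK, map_ofNat]
    exact norm_three_eq_one hp (by lia) hpL
  have hcube {m : ℤ} (hm : ¬(p : ℤ) ∣ m) : IsCube (φ m) := by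
    simpa only [φ, map_intCast] using isCube_intCast hp hp3 hpL hm
  have hnorm {m : ℤ} (hm : ¬(p : ℤ) ∣ m) : ‖φ m‖ = 1 := by
    simpa only [φ, map_intCast] using norm_intCast_eq_one_of_not_dvd hp hpL hm
  have hv1 : ‖φ v‖ = 1 := by
    rw [← pow_eq_one_iff_of_nonneg (norm_nonneg _) three_ne_zero, ← norm_pow, ← map_pow, hv,
      map_one, norm_one]
  have hvn : ‖φ n * φ v‖ = 1 := by rw [norm_mul, hnorm hn, hv1, one_mul]
  have hn0 : φ n ≠ 0 := norm_ne_zero_iff.1 (hnorm hn ▸ one_ne_zero)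
  rw [map_mul, map_pow, map_mul, map_mul, map_pow, mul_comm (algebraMap _ _ v),
    cubicHasPoint_sq_mul_iff hpK h3 hvn (hnorm hc) (hcube hc), isCube_mul_left_iff (hcube hn) hn0]
  refine ⟨eq_one_of_isCube_of_pow_three_eq_one hpK hv h3 hN, ?_⟩
  rintro rfl
  exact ⟨1, by simp⟩

lemma three_dvd_of_cubicHasPoint_of_not_dvd {A u : 𝓞 K} (hA : ¬q ∣ A) (hu : ¬q ∣ u) {n : ℕ}
    (h : CubicHasPoint (algebraMap (𝓞 K) (CompletionAt hq) A)
      (algebraMap (𝓞 K) (CompletionAt hq) (q ^ n * u))) : 3 ∣ n := by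
  have hα0 : q ^ n * u ≠ 0 := mul_ne_zero (pow_ne_zero n hq.ne_zero) fun h => hu (h ▸ dvd_zero q)
  obtain ⟨t, ht⟩ := norm_eq_norm_pow_three_of_cubicHasPoint
    ((norm_algebraMap_eq_one_iff hq).2 hA) (algebraMap_completionAt_ne_zero hq hα0) h
  rw [map_mul, map_pow, norm_mul, (norm_algebraMap_eq_one_iff hq).2 hu, mul_one, norm_pow] at ht
  exact three_dvd_of_norm_pow_eq hq ht

end Completion

section Ramified

lemma nine_dvd_of_nine_dvd_sign_cubic {A b : ℤ} {e₁ e₂ e₃ : SignType} (hA : 9 ∣ A - 1)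
    (hb : ¬3 ∣ b) (hne : e₁ ≠ 0 ∨ e₂ ≠ 0 ∨ e₃ ≠ 0) (h : 9 ∣ b ^ 2 * e₁ + e₂ - A * b * e₃) :
    9 ∣ b - 1 ∨ 9 ∣ b + 1 := by
  have hcast (n : ℤ) : 9 ∣ n ↔ (n : ZMod 9) = 0 := (ZMod.intCast_zmod_eq_zero_iff_dvd n 9).symm
  have hdecide : ∀ {b : ZMod 9} {e₁ e₂ e₃ : SignType}, 3 * b ≠ 0 → (e₁ ≠ 0 ∨ e₂ ≠ 0 ∨ e₃ ≠ 0) →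
      b ^ 2 * e₁ + e₂ - b * e₃ = 0 → b - 1 = 0 ∨ b + 1 = 0 := by
    decide
  have hb9 : ¬9 ∣ 3 * b := by lia
  simp only [hcast] at hA hb9 h ⊢
  push_cast at hA hb9 h ⊢
  rw [sub_eq_zero.1 hA, one_mul] at h
  exact hdecide hb9 hne h

variable {K : Type*} [Field K] [NumberField K]

lemma cubicHasPoint_of_dvd_three {q : 𝓞 K} (hq : Prime q) (h3 : q ∣ 3) (A : 𝓞 K) {b : ℤ}
    (hb : 9 ∣ b - 1 ∨ 9 ∣ b + 1) :
    CubicHasPoint (algebraMap (𝓞 K) (CompletionAt hq) A)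
      (algebraMap (𝓞 K) (CompletionAt hq) b) := by
  have hcube {b : ℤ} (hb : 9 ∣ b - 1) : IsCube (b : CompletionAt hq) := by
    obtain ⟨m, hm⟩ := hb
    refine isCube_of_norm_sub_one_le_norm_nine ?_ ?_ ?_
    · simpa only [map_ofNat] using
        algebraMap_completionAt_ne_zero hq (OfNat.ofNat_ne_zero 3)
    · simpa only [map_ofNat] using (norm_algebraMap_lt_one_iff hq).2 h3
    · have hm' : (b : CompletionAt hq) - 1 = 9 * m := by
        exact_mod_cast congrArg (Int.cast : ℤ → CompletionAt hq) hm
      rw [hm', mul_comm]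
      exact norm_intCast_mul_le m _
  rw [map_intCast]
  refine IsCube.cubicHasPoint ?_ _
  rcases hb with hb | hb
  · exact hcube hb
  · have := (hcube (b := -b) (by rwa [← neg_add', dvd_neg])).neg
    rwa [Int.cast_neg, neg_neg] at this

variable {ζ : K} (hζ : IsPrimitiveRoot ζ 3) (hq : Prime (hζ.toInteger - 1))

-- `3` generates `(λ) ^ 2`, where `λ = ζ - 1`.
lemma norm_lambda_pow_three_lt :
    ‖algebraMap (𝓞 K) (CompletionAt hq) ((hζ.toInteger - 1) ^ 3)‖ < ‖(3 : CompletionAt hq)‖ := by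
  have hsq : (hζ.toInteger - 1) ^ 2 = 3 * -hζ.toInteger := by
    have := IsCyclotomicExtension.Rat.Three.eta_sq hζ
    rw [IsCyclotomicExtension.Rat.Three.coe_eta] at this
    linear_combination this
  have hlt := (norm_algebraMap_lt_one_iff hq).2 dvd_rfl
  have hpos := norm_pos_iff.2 (algebraMap_completionAt_ne_zero hq (pow_ne_zero 2 hq.ne_zero))
  rw [pow_succ, map_mul, norm_mul]
  refine (mul_lt_of_lt_one_right hpos hlt).trans_le ?_
  rw [hsq, map_mul, norm_mul, map_ofNat]
  exact mul_le_of_le_one_right (norm_nonneg _) (norm_algebraMap_le_one hq _)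

lemma exists_norm_pow_three_sub_sign_le [IsCyclotomicExtension {3} ℚ K] {w : CompletionAt hq}
    (hw : ‖w‖ ≤ 1) : ∃ e : SignType, ‖w ^ 3 - ((e : ℤ) : CompletionAt hq)‖ ≤
        ‖algebraMap (𝓞 K) (CompletionAt hq) ((hζ.toInteger - 1) ^ 3)‖ ∧ (‖w‖ = 1 → e ≠ 0) := by
  obtain ⟨r, hr⟩ := exists_norm_sub_algebraMap_le hq hw (pow_ne_zero 3 hq.ne_zero)
  have hr3 := (norm_pow_sub_pow_le hw (norm_algebraMap_le_one hq r) 3).trans hr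
  have hsign {e : SignType} (he : (hζ.toInteger - 1) ^ 3 ∣ r ^ 3 - (e : ℤ)) :
      ‖w ^ 3 - ((e : ℤ) : CompletionAt hq)‖ ≤
        ‖algebraMap (𝓞 K) (CompletionAt hq) ((hζ.toInteger - 1) ^ 3)‖ := by
    obtain ⟨s, hs⟩ := he
    have hs' := congrArg (algebraMap (𝓞 K) (CompletionAt hq)) hs
    rw [map_sub, map_intCast, map_pow, map_mul] at hs'
    rw [← sub_add_sub_cancel _ (algebraMap (𝓞 K) (CompletionAt hq) r ^ 3), hs']
    refine ultrametric_norm_add_le hr3 ?_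
    rw [norm_mul]
    exact mul_le_of_le_one_right (norm_nonneg _) (norm_algebraMap_le_one hq s)
  by_cases hdvd : hζ.toInteger - 1 ∣ r
  · refine ⟨0, hsign (by simpa using pow_dvd_pow_of_dvd hdvd 3), fun hw1 => ?_⟩
    have hlt : ‖w - algebraMap (𝓞 K) (CompletionAt hq) r‖ < 1 :=
      hr.trans_lt ((norm_algebraMap_lt_one_iff hq).2 (dvd_pow_self _ three_ne_zero))
    have := IsUltrametricDist.norm_add_le_max (w - algebraMap (𝓞 K) (CompletionAt hq) r)
      (algebraMap (𝓞 K) (CompletionAt hq) r)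
    rw [sub_add_cancel, hw1] at this
    exact absurd this (max_lt hlt ((norm_algebraMap_lt_one_iff hq).2 hdvd)).not_ge
  · have h43 := pow_dvd_pow (hζ.toInteger - 1) (by decide : 3 ≤ 4)
    open IsCyclotomicExtension.Rat.Three in
    rcases lambda_pow_four_dvd_cube_sub_one_or_add_one_of_lambda_not_dvd hζ hdvd with h | h
    · exact ⟨1, hsign (by simpa using h43.trans h), fun _ => by decide⟩
    · exact ⟨-1, hsign (by simpa using h43.trans h), fun _ => by decide⟩

lemma nine_dvd_of_cubicHasPoint [IsCyclotomicExtension {3} ℚ K] {A b : ℤ} (hA : 9 ∣ A - 1)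
    (hb : ¬3 ∣ b) (h : CubicHasPoint (algebraMap (𝓞 K) (CompletionAt hq) A)
      (algebraMap (𝓞 K) (CompletionAt hq) b)) : 9 ∣ b - 1 ∨ 9 ∣ b + 1 := by
  have hb0 : algebraMap (𝓞 K) (CompletionAt hq) b ≠ 0 :=
    algebraMap_completionAt_ne_zero hq (Int.cast_ne_zero.2 fun h => hb (h ▸ dvd_zero 3))
  obtain ⟨x, y, z, hx, hy, hz, hne, h⟩ := exists_norm_le_one_of_cubicHasPoint hb0 h
  rw [map_intCast, map_intCast] at h
  obtain ⟨e₁, he₁, hx1⟩ := exists_norm_pow_three_sub_sign_le hζ hq hx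
  obtain ⟨e₂, he₂, hy1⟩ := exists_norm_pow_three_sub_sign_le hζ hq hy
  obtain ⟨e₃, he₃, hz1⟩ := exists_norm_pow_three_sub_sign_le hζ hq hz
  have h9 : (3 : ℤ) ^ (1 + 1) ∣ b ^ 2 * e₁ + e₂ - A * b * e₃ := by
    have h3 : ‖((3 : ℕ) : CompletionAt hq)‖ < 1 := by
      simpa only [map_ofNat, Nat.cast_ofNat] using
        (norm_algebraMap_lt_one_iff hq).2 hζ.toInteger_sub_one_dvd_prime'
    refine pow_succ_dvd_of_norm_intCast_lt Nat.prime_three h3 ?_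
    rw [pow_one]
    refine lt_of_le_of_lt ?_ (norm_lambda_pow_three_lt hζ hq)
    have hsum : ((b ^ 2 * e₁ + e₂ - A * b * e₃ : ℤ) : CompletionAt hq) =
        (A * b : ℤ) * (z ^ 3 - (e₃ : ℤ)) -
          ((b ^ 2 : ℤ) * (x ^ 3 - (e₁ : ℤ)) + (y ^ 3 - (e₂ : ℤ))) := by
      push_cast
      linear_combination h
    rw [hsum]
    exact ultrametric_norm_sub_le ((norm_intCast_mul_le _ _).trans he₃)
      (ultrametric_norm_add_le ((norm_intCast_mul_le _ _).trans he₁) he₂)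
  exact nine_dvd_of_nine_dvd_sign_cubic hA hb (hne.imp hx1 (Or.imp hy1 hz1)) h9

end Ramified

section Factorization

variable {M : Type*} [CommMonoidWithZero M]

lemma exists_associated_pow_of_dvd_multiplicity [UniqueFactorizationMonoid M] {k : ℕ} {x : M}
    (hx : x ≠ 0) (h : ∀ q : M, Prime q → k ∣ multiplicity q x) : ∃ s, Associated (s ^ k) x := by
  induction x using (wellFounded_dvdNotUnit (α := M)).induction with
  | _ x ih =>
    by_cases hu : IsUnit x
    · exact ⟨1, by simpa using (associated_one_iff_isUnit.2 hu).symm⟩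
    obtain ⟨q, hq, hqx⟩ := WfDvdMonoid.exists_irreducible_factor hu hx
    rw [irreducible_iff_prime] at hq
    obtain ⟨c, hc, -⟩ := (FiniteMultiplicity.of_prime_left hq hx).exists_eq_pow_mul_and_not_dvd
    obtain ⟨m, hm⟩ := h q hq
    have hc0 : c ≠ 0 := right_ne_zero_of_mul (hc ▸ hx)
    have hlt : DvdNotUnit c x := by
      refine ⟨hc0, q ^ multiplicity q x, ?_, hc.trans (mul_comm _ _)⟩
      rw [isUnit_pow_iff (multiplicity_pos_of_dvd hqx).ne']
      exact hq.not_isUnit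
    obtain ⟨s, hs⟩ := ih c hlt hc0 fun r hr => by
      have hfr := FiniteMultiplicity.of_prime_left hr hx
      have hrx := h r hr
      rw [hc] at hfr hrx
      rw [multiplicity_mul hr hfr, FiniteMultiplicity.multiplicity_pow hr
        (FiniteMultiplicity.of_prime_left hr hq.ne_zero), hm, mul_assoc] at hrx
      exact (Nat.dvd_add_right (dvd_mul_right k _)).1 hrx
    refine ⟨q ^ m * s, ?_⟩
    rw [hc, mul_pow, ← pow_mul, mul_comm m, ← hm]
    exact hs.mul_left _

lemma exists_eq_prod_pow_mul_and_not_dvd [WfDvdMonoid M] {ι : Type*} (s : Finset ι) {P : ι → M}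
    (hP : ∀ i, ¬IsUnit (P i)) {x : M} (hx : x ≠ 0) :
    ∃ (e : ι → ℕ) (y : M), x = (∏ i ∈ s, P i ^ e i) * y ∧ ∀ i ∈ s, ¬P i ∣ y := by
  classical
  induction s using Finset.induction_on with
  | empty => exact ⟨0, x, by simp⟩
  | insert a s ha ih =>
    obtain ⟨e, y, rfl, hy⟩ := ih
    obtain ⟨n, c, hc, rfl⟩ := WfDvdMonoid.max_power_factor' (right_ne_zero_of_mul hx) (hP a)
    refine ⟨Function.update e a n, c, ?_, ?_⟩
    · have hcongr : ∏ i ∈ s, P i ^ Function.update e a n i = ∏ i ∈ s, P i ^ e i :=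
        Finset.prod_congr rfl fun i hi => by
          rw [Function.update_of_ne (ne_of_mem_of_not_mem hi ha)]
      rw [Finset.prod_insert ha, Function.update_self, hcongr]
      ac_rfl
    · rw [Finset.forall_mem_insert]
      exact ⟨hc, fun i hi h => hy i hi (h.mul_left _)⟩

end Factorization

lemma exists_eq_algebraMap_mul_pow_three (R : Type*) {F : Type*} [CommRing R]
    [IsDomain R] [Field F] [Algebra R F] [IsFractionRing R F] {a : F} (ha : a ≠ 0) :
    ∃ x : R, x ≠ 0 ∧ ∃ c : F, c ≠ 0 ∧ a = algebraMap R F x * c ^ 3 := by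
  obtain ⟨n, d, hd, rfl⟩ := IsFractionRing.div_surjective (A := R) a
  have hd0 : algebraMap R F d ≠ 0 := by
    simpa using nonZeroDivisors.ne_zero hd
  have hn0 : n ≠ 0 := by
    rintro rfl
    simp at ha
  refine ⟨n * d ^ 2, mul_ne_zero hn0 (pow_ne_zero 2 (nonZeroDivisors.ne_zero hd)),
    (algebraMap R F d)⁻¹, inv_ne_zero hd0, ?_⟩
  rw [map_mul, map_pow]
  field_simp

section Eisenstein

variable (K : Type*) [Field K] [NumberField K] [IsCyclotomicExtension {3} ℚ K]

lemma absNorm_span_natCast_eq_sq (n : ℕ) :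
    Ideal.absNorm (Ideal.span {(n : 𝓞 K)}) = n ^ 2 := by
  rw [Ideal.absNorm_span_natCast, RingOfIntegers.rank, IsCyclotomicExtension.Rat.finrank 3 K]
  rfl

lemma prime_natCast_of_mod_three_eq_two {p : ℕ} (hp : p.Prime) (hp3 : p % 3 = 2) :
    Prime (p : 𝓞 K) := by
  have : Fact p.Prime := ⟨hp⟩
  have hprime := Nat.prime_iff_prime_int.1 hp
  have : (Ideal.span {(p : ℤ)}).IsMaximal :=
    ((Ideal.span_singleton_prime hprime.ne_zero).2 hprime).isMaximal (by simpa using hp.ne_zero)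
  obtain ⟨P, hP, hPp⟩ :=
    Ideal.exists_maximal_ideal_liesOver_of_isIntegral (Ideal.span {(p : ℤ)}) (S := 𝓞 K)
  have hcast : (p : ZMod 3) = 2 := by
    rw [← ZMod.natCast_mod, hp3]
    rfl
  have hnorm : P.absNorm = (Ideal.span {(p : 𝓞 K)}).absNorm := by
    rw [Ideal.absNorm_eq_pow_inertiaDeg' P hp, Ideal.inertiaDeg'_eq_inertiaDeg,
      IsCyclotomicExtension.Rat.inertiaDeg_eq_of_not_dvd p K P
        fun h => absurd ((Nat.prime_dvd_prime_iff_eq hp Nat.prime_three).1 h) (by lia),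
      absNorm_span_natCast_eq_sq, hcast, orderOf_eq_prime (p := 2) rfl (by decide)]
  have hle : Ideal.span {(p : 𝓞 K)} ≤ P := by
    rw [Ideal.span_singleton_le_iff_mem]
    simpa using Ideal.mem_of_liesOver P (Ideal.span {(p : ℤ)}) (p : ℤ)
  obtain ⟨J, hJ⟩ := Ideal.dvd_iff_le.2 hle
  have hJ1 : J.absNorm = 1 := by
    have hP0 : P.absNorm ≠ 0 := by simp [hnorm, hp.ne_zero]
    rw [hJ, map_mul] at hnorm
    exact (mul_eq_left₀ hP0).1 hnorm.symm
  rw [Ideal.absNorm_eq_one_iff.1 hJ1, Ideal.mul_top] at hJ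
  rw [← Ideal.span_singleton_prime (Nat.cast_ne_zero.2 hp.ne_zero), hJ]
  exact hP.isPrime

lemma prime_natCast_of_mod_nine {p : ℕ} (hp : p.Prime) (hp9 : p % 9 = 2 ∨ p % 9 = 5) :
    Prime (p : 𝓞 K) :=
  prime_natCast_of_mod_three_eq_two K hp (by lia)

lemma not_nine_dvd_card_quotient_sub_one {p : ℕ} (hp : p % 9 = 2 ∨ p % 9 = 5) :
    ¬9 ∣ Nat.card (𝓞 K ⧸ Ideal.span {(p : 𝓞 K)}) - 1 := by
  have hcard : Nat.card (𝓞 K ⧸ Ideal.span {(p : 𝓞 K)}) = p ^ 2 := absNorm_span_natCast_eq_sq K p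
  have hsq : p ^ 2 % 9 = 4 ∨ p ^ 2 % 9 = 7 := by
    rcases hp with hp | hp <;> simp [Nat.pow_mod, hp]
  rw [hcard]
  lia

variable {K}

lemma exists_pow_three_eq_one_and_eq_mul_pow_three (u : (𝓞 K)ˣ) :
    ∃ v : 𝓞 K, v ^ 3 = 1 ∧ ∃ s : 𝓞 K, (u : 𝓞 K) = v * s ^ 3 := by
  have hζ := IsCyclotomicExtension.zeta_spec 3 ℚ K
  have hcube := hζ.toInteger_cube_eq_one
  have hcube2 : (hζ.toInteger ^ 2) ^ 3 = 1 := by rw [pow_right_comm, hcube, one_pow]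
  have hmem := IsCyclotomicExtension.Rat.Three.Units.mem hζ u
  simp only [List.mem_cons, List.not_mem_nil, or_false] at hmem
  rcases hmem with rfl | rfl | rfl | rfl | rfl | rfl
  · exact ⟨1, one_pow 3, 1, by simp⟩
  · exact ⟨1, one_pow 3, -1, by simp [Odd.neg_one_pow (show Odd 3 by decide)]⟩
  · exact ⟨_, hcube, 1, by simp⟩
  · exact ⟨_, hcube, -1, by simp [Odd.neg_one_pow (show Odd 3 by decide)]⟩
  · exact ⟨_, hcube2, 1, by simp⟩
  · exact ⟨_, hcube2, -1, by simp [Odd.neg_one_pow (show Odd 3 by decide)]⟩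

end Eisenstein

section ModNine

lemma pow_eq_one_or_eq_neg_one_iff_three_dvd {r : ZMod 9} (hr : r = 2 ∨ r = 5) (n : ℕ) :
    r ^ n = 1 ∨ r ^ n = -1 ↔ 3 ∣ n := by
  have hr6 : r ^ 6 = 1 := by
    rcases hr with rfl | rfl <;> decide
  have hlt := Nat.mod_lt n (show 6 > 0 by decide)
  rw [pow_eq_pow_mod n hr6, ← Nat.dvd_mod_iff (by decide : 3 ∣ 6)]
  generalize n % 6 = m at hlt
  rcases hr with rfl | rfl <;> decide +revert

variable {ι : Type*} [Fintype ι] {p : ι → ℕ}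

lemma exists_prod_pow_eq_pow_sum (hmod : (∀ i, p i % 9 = 2) ∨ (∀ i, p i % 9 = 5)) :
    ∃ r : ZMod 9, (r = 2 ∨ r = 5) ∧ ∀ e : ι → ℕ,
      ((∏ i, (p i : ℤ) ^ e i : ℤ) : ZMod 9) = r ^ ∑ i, e i := by
  have hcast (i : ι) : (p i : ZMod 9) = (p i % 9 : ℕ) := (ZMod.natCast_mod _ _).symm
  rcases hmod with h | h
  · exact ⟨2, .inl rfl, fun e => by simp [hcast, h, Finset.prod_pow_eq_pow_sum]⟩
  · exact ⟨5, .inr rfl, fun e => by simp [hcast, h, Finset.prod_pow_eq_pow_sum]⟩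

lemma nine_dvd_prod_pow_sub_one_or_add_one_iff
    (hmod : (∀ i, p i % 9 = 2) ∨ (∀ i, p i % 9 = 5)) (e : ι → ℕ) :
    (9 ∣ (∏ i, (p i : ℤ) ^ e i) - 1 ∨ 9 ∣ (∏ i, (p i : ℤ) ^ e i) + 1) ↔ 3 ∣ ∑ i, e i := by
  obtain ⟨r, hr, hprod⟩ := exists_prod_pow_eq_pow_sum hmod
  have hcast (n : ℤ) : 9 ∣ n ↔ (n : ZMod 9) = 0 := (ZMod.intCast_zmod_eq_zero_iff_dvd n 9).symm
  rw [hcast, hcast, Int.cast_sub, Int.cast_add, Int.cast_one, hprod, sub_eq_zero,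
    ← eq_neg_iff_add_eq_zero, pow_eq_one_or_eq_neg_one_iff_three_dvd hr]

lemma nine_dvd_prod_sq_sub_one (hmod : (∀ i, p i % 9 = 2) ∨ (∀ i, p i % 9 = 5))
    (hcard : 3 ∣ Fintype.card ι) : 9 ∣ (∏ i, (p i : ℤ) ^ 2) - 1 := by
  obtain ⟨r, hr, hprod⟩ := exists_prod_pow_eq_pow_sum hmod
  obtain ⟨k, hk⟩ := hcard
  have hr6 : r ^ 6 = 1 := by
    rcases hr with rfl | rfl <;> decide
  refine (ZMod.intCast_zmod_eq_zero_iff_dvd _ 9).1 ?_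
  rw [Int.cast_sub, Int.cast_one, hprod fun _ => 2, Finset.sum_const, Finset.card_univ, hk,
    smul_eq_mul, show 3 * k * 2 = 6 * k by ring, pow_mul, hr6, one_pow, sub_self]

end ModNine

lemma prod_natCast_pow_eq_intCast {R ι : Type*} [CommRing R] [Fintype ι] (p e : ι → ℕ) :
    ∏ i, (p i : R) ^ e i = ((∏ i, (p i : ℤ) ^ e i : ℤ) : R) := by
  push_cast
  rfl

section Selmer

variable {K : Type*} [Field K] [NumberField K]

/-- `C_{A,α}` has a point over every non-archimedean completion of `K`. When all archimedean
places of `K` are complex, this says that `[α]` lies in the `√-3`-Selmer group `S(A)`. -/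
def EverywhereLocallySoluble (A α : K) : Prop :=
  ∀ (q : 𝓞 K) (hq : Prime q),
    CubicHasPoint (algebraMap K (CompletionAt hq) A) (algebraMap K (CompletionAt hq) α)

lemma everywhereLocallySoluble_mul_pow_three {A α γ : K} (hγ : γ ≠ 0) :
    EverywhereLocallySoluble A (α * γ ^ 3) ↔ EverywhereLocallySoluble A α := by
  refine forall₂_congr fun q hq => ?_
  rw [map_mul, map_pow, cubicHasPoint_mul_pow_three (by simpa using hγ)]

lemma cubicHasPoint_completionAt_iff_of_dvd {q r : 𝓞 K} (hq : Prime q) (hr : Prime r)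
    (h : q ∣ r) (A α : 𝓞 K) :
    CubicHasPoint (algebraMap (𝓞 K) (CompletionAt hq) A) (algebraMap (𝓞 K) (CompletionAt hq) α) ↔
      CubicHasPoint (algebraMap (𝓞 K) (CompletionAt hr) A)
        (algebraMap (𝓞 K) (CompletionAt hr) α) := by
  have heq : primeSpec hq = primeSpec hr :=
    HeightOneSpectrum.ext (Ideal.span_singleton_eq_span_singleton.2
      (hq.associated_of_dvd hr h))
  unfold CompletionAt
  rw [heq]

variable [IsCyclotomicExtension {3} ℚ K] {ι : Type*} [Fintype ι]

lemma exists_eq_mul_prod_pow_mul_pow_three {P : ι → 𝓞 K} (hP : ∀ i, Prime (P i)) {A : 𝓞 K}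
    (hA : ∀ q, Prime q → q ∣ A → ∃ i, P i ∣ q) {α : K} (hα : α ≠ 0)
    (h : EverywhereLocallySoluble (algebraMap (𝓞 K) K A) α) :
    ∃ v : 𝓞 K, v ^ 3 = 1 ∧ ∃ (e : ι → ℕ) (γ : K),
      γ ≠ 0 ∧ α = algebraMap (𝓞 K) K (v * ∏ i, P i ^ e i) * γ ^ 3 := by
  have := IsCyclotomicExtension.Rat.three_pid K
  obtain ⟨x, hx0, c, hc0, rfl⟩ := exists_eq_algebraMap_mul_pow_three (𝓞 K) hα
  rw [everywhereLocallySoluble_mul_pow_three hc0] at h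
  obtain ⟨e, y, rfl, hy⟩ :=
    exists_eq_prod_pow_mul_and_not_dvd Finset.univ (fun i => (hP i).not_isUnit) hx0
  have hy0 := right_ne_zero_of_mul hx0
  have hmult (q : 𝓞 K) (hq : Prime q) : 3 ∣ multiplicity q y := by
    by_cases hPq : ∃ i, P i ∣ q
    · obtain ⟨i, hi⟩ := hPq
      rw [multiplicity_eq_zero.2 fun hqy => hy i (Finset.mem_univ i) (hi.trans hqy)]
      exact dvd_zero 3
    obtain ⟨u, hu, hqu⟩ := (FiniteMultiplicity.of_prime_left hq hy0).exists_eq_pow_mul_and_not_dvd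
    refine three_dvd_of_cubicHasPoint_of_not_dvd hq (u := u * ∏ i, P i ^ e i)
      (fun hqA => hPq (hA q hq hqA)) (hq.not_dvd_mul hqu ?_) ?_
    · refine hq.not_dvd_finsetProd fun i _ hqP => hPq ⟨i, ?_⟩
      exact (hq.associated_of_dvd (hP i) (hq.dvd_of_dvd_pow hqP)).symm.dvd
    · rw [← mul_assoc, ← hu, mul_comm y]
      exact h q hq
  obtain ⟨s, u, rfl⟩ := exists_associated_pow_of_dvd_multiplicity hy0 hmult
  obtain ⟨v, hv, t, ht⟩ := exists_pow_three_eq_one_and_eq_mul_pow_three u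
  have hγ0 : s * t ≠ 0 := by
    rw [ht] at hy0
    aesop
  refine ⟨v, hv, e, algebraMap (𝓞 K) K (s * t) * c, mul_ne_zero (by simpa using hγ0) hc0, ?_⟩
  rw [ht]
  simp only [map_mul, map_pow]
  ring

variable {p : ι → ℕ}

lemma cubicHasPoint_prod_iff_eq_one (hp : ∀ i, (p i).Prime) (hinj : Function.Injective p)
    (hmod : ∀ i, p i % 9 = 2 ∨ p i % 9 = 5) (i : ι) (hpK : Prime (p i : 𝓞 K)) {v : 𝓞 K}
    (hv : v ^ 3 = 1) (e : ι → ℕ) :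
    CubicHasPoint (algebraMap (𝓞 K) (CompletionAt hpK) (∏ j, (p j : 𝓞 K) ^ 2))
      (algebraMap (𝓞 K) (CompletionAt hpK) (v * ∏ j, (p j : 𝓞 K) ^ e j)) ↔ v = 1 := by
  classical
  have hnot (f : ι → ℕ) : ¬(p i : ℤ) ∣ ∏ j ∈ Finset.univ.erase i, (p j : ℤ) ^ f j := by
    refine (Nat.prime_iff_prime_int.1 (hp i)).not_dvd_finsetProd fun j hj h => ?_
    have := Int.natCast_dvd_natCast.1 ((Nat.prime_iff_prime_int.1 (hp i)).dvd_of_dvd_pow h)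
    exact Finset.ne_of_mem_erase hj (hinj ((Nat.prime_dvd_prime_iff_eq (hp i) (hp j)).1 this)).symm
  have hsplit (f : ι → ℕ) : ∏ j, (p j : 𝓞 K) ^ f j =
      (p i : 𝓞 K) ^ f i * ((∏ j ∈ Finset.univ.erase i, (p j : ℤ) ^ f j : ℤ) : 𝓞 K) := by
    rw [← Finset.mul_prod_erase _ _ (Finset.mem_univ i)]
    push_cast
    rfl
  rw [hsplit fun _ => 2, hsplit e, mul_comm (_ ^ e i), ← mul_assoc]
  exact cubicHasPoint_iff_eq_one_of_prime (hp i) (by have := hmod i; lia) hpK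
    (not_nine_dvd_card_quotient_sub_one K (hmod i)) hv (hnot fun _ => 2) (hnot e) (e i)

lemma eq_one_and_three_dvd_sum_of_everywhereLocallySoluble [Nonempty ι]
    (hp : ∀ i, (p i).Prime) (hinj : Function.Injective p)
    (hmod : (∀ i, p i % 9 = 2) ∨ (∀ i, p i % 9 = 5)) (hcard : 3 ∣ Fintype.card ι)
    {v : 𝓞 K} (hv : v ^ 3 = 1) {e : ι → ℕ}
    (h : EverywhereLocallySoluble (algebraMap (𝓞 K) K (∏ i, (p i : 𝓞 K) ^ 2))
      (algebraMap (𝓞 K) K (v * ∏ i, (p i : 𝓞 K) ^ e i))) :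
    v = 1 ∧ 3 ∣ ∑ i, e i := by
  have hmod' (i : ι) : p i % 9 = 2 ∨ p i % 9 = 5 := hmod.imp (· i) (· i)
  obtain ⟨i⟩ := ‹Nonempty ι›
  have hpK := prime_natCast_of_mod_nine K (hp i) (hmod' i)
  obtain rfl := (cubicHasPoint_prod_iff_eq_one hp hinj hmod' i hpK hv e).1 (h _ hpK)
  refine ⟨rfl, (nine_dvd_prod_pow_sub_one_or_add_one_iff hmod e).1 ?_⟩
  have hζ := IsCyclotomicExtension.zeta_spec 3 ℚ K
  have hlocal := h _ hζ.zeta_sub_one_prime'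
  rw [one_mul, prod_natCast_pow_eq_intCast p fun _ => 2, prod_natCast_pow_eq_intCast p e] at hlocal
  refine nine_dvd_of_cubicHasPoint hζ _ (nine_dvd_prod_sq_sub_one hmod hcard) ?_ hlocal
  refine Int.prime_three.not_dvd_finsetProd fun j _ hj => ?_
  have := Int.prime_three.dvd_of_dvd_pow hj
  have := hmod' j
  lia

lemma everywhereLocallySoluble_prod (hp : ∀ i, (p i).Prime) (hinj : Function.Injective p)
    (hmod : (∀ i, p i % 9 = 2) ∨ (∀ i, p i % 9 = 5)) {e : ι → ℕ} (he : 3 ∣ ∑ i, e i) :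
    EverywhereLocallySoluble (algebraMap (𝓞 K) K (∏ i, (p i : 𝓞 K) ^ 2))
      (algebraMap (𝓞 K) K (∏ i, (p i : 𝓞 K) ^ e i)) := by
  intro q hq
  change CubicHasPoint (algebraMap (𝓞 K) (CompletionAt hq) _)
    (algebraMap (𝓞 K) (CompletionAt hq) _)
  by_cases h3 : q ∣ 3
  · rw [prod_natCast_pow_eq_intCast p e]
    exact cubicHasPoint_of_dvd_three hq h3 _
      ((nine_dvd_prod_pow_sub_one_or_add_one_iff hmod e).2 he)
  by_cases hqp : ∃ i, q ∣ p i
  · obtain ⟨i, hi⟩ := hqp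
    have hmod' (i : ι) : p i % 9 = 2 ∨ p i % 9 = 5 := hmod.imp (· i) (· i)
    have hpK := prime_natCast_of_mod_nine K (hp i) (hmod' i)
    rw [cubicHasPoint_completionAt_iff_of_dvd hq hpK hi, ← one_mul (∏ i, (p i : 𝓞 K) ^ e i)]
    exact (cubicHasPoint_prod_iff_eq_one hp hinj hmod' i hpK (one_pow 3) e).2 rfl
  have hnot (f : ι → ℕ) : ¬q ∣ ∏ i, (p i : 𝓞 K) ^ f i :=
    hq.not_dvd_finsetProd fun i _ h => hqp ⟨i, hq.dvd_of_dvd_pow h⟩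
  exact cubicHasPoint_of_not_dvd hq h3 (hnot _) (hnot e)

end Selmer

section Exponents

variable {F : Type*} [Field F]

lemma exists_zpow_eq_pow_mul_pow_three {x : F} (hx : x ≠ 0) (m : ℤ) :
    ∃ (i : ℕ) (t : F), x ^ m = x ^ i * t ^ 3 := by
  obtain ⟨i, rfl | rfl⟩ := m.eq_nat_or_neg
  · exact ⟨i, 1, by simp⟩
  · exact ⟨2 * i, (x ^ i)⁻¹, by rw [zpow_neg, zpow_natCast]; field_simp; ring⟩

lemma exists_prod_pow_fin_three_iff_exists_zpow {a : Fin 3 → F} (ha : ∀ i, a i ≠ 0) {α : F} :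
    (∃ (e : Fin 3 → ℕ) (γ : F), 3 ∣ ∑ i, e i ∧ α = (∏ i, a i ^ e i) * γ ^ 3) ↔
      ∃ (m n : ℤ) (γ : F), α = (∏ i, a i ^ 2) ^ m * (a 0 * a 1 ^ 2) ^ n * γ ^ 3 := by
  have hA : ∏ i, a i ^ 2 ≠ 0 := Finset.prod_ne_zero_iff.2 fun i _ => pow_ne_zero 2 (ha i)
  have hB : a 0 * a 1 ^ 2 ≠ 0 := mul_ne_zero (ha 0) (pow_ne_zero 2 (ha 1))
  constructor
  · rintro ⟨e, γ, ⟨k, hk⟩, rfl⟩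
    rw [Fin.sum_univ_three] at hk
    have hcube : (a 2 ^ e 2 * a 1 ^ k / a 1 ^ (e 0 + e 2) * γ) ^ 3 =
        a 2 ^ (3 * e 2) * a 1 ^ (e 0 + e 1 + e 2) / a 1 ^ (3 * (e 0 + e 2)) * γ ^ 3 := by
      rw [hk]
      ring
    refine ⟨-(e 2 : ℕ), (e 0 + 2 * e 2 : ℕ), a 2 ^ e 2 * a 1 ^ k / a 1 ^ (e 0 + e 2) * γ, ?_⟩
    rw [zpow_neg, zpow_natCast, zpow_natCast, hcube, Fin.prod_univ_three, Fin.prod_univ_three]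
    have := ha 0
    have := ha 1
    have := ha 2
    field_simp
    ring
  · rintro ⟨m, n, γ, rfl⟩
    obtain ⟨i, s, hs⟩ := exists_zpow_eq_pow_mul_pow_three hA m
    obtain ⟨j, t, ht⟩ := exists_zpow_eq_pow_mul_pow_three hB n
    refine ⟨![2 * i + j, 2 * i + 2 * j, 2 * i], s * t * γ, ⟨2 * i + j, ?_⟩, ?_⟩
    · rw [Fin.sum_univ_three]
      simp only [Matrix.cons_val]
      ring
    · rw [hs, ht, Fin.prod_univ_three, Fin.prod_univ_three]
      simp only [Matrix.cons_val]
      ring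

end Exponents

theorem stmt7_general (K : Type*) [Field K] [NumberField K] [IsCyclotomicExtension {3} ℚ K]
    {ι : Type*} [Fintype ι] [Nonempty ι] (p : ι → ℕ) (hp : ∀ i, (p i).Prime)
    (hinj : Function.Injective p) (hmod : (∀ i, p i % 9 = 2) ∨ (∀ i, p i % 9 = 5))
    (hcard : 3 ∣ Fintype.card ι) (α : K) (hα : α ≠ 0) :
    EverywhereLocallySoluble (∏ i, (p i : K) ^ 2) α ↔
      ∃ (e : ι → ℕ) (γ : K), 3 ∣ ∑ i, e i ∧ α = (∏ i, (p i : K) ^ e i) * γ ^ 3 := by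
  have hcast (f : ι → ℕ) :
      ∏ i, (p i : K) ^ f i = algebraMap (𝓞 K) K (∏ i, (p i : 𝓞 K) ^ f i) := by simp
  have hpK (i : ι) : Prime (p i : 𝓞 K) :=
    prime_natCast_of_mod_nine K (hp i) (hmod.imp (· i) (· i))
  have hsupp (q : 𝓞 K) (hq : Prime q) (hqA : q ∣ ∏ i, (p i : 𝓞 K) ^ 2) : ∃ i, (p i : 𝓞 K) ∣ q := by
    obtain ⟨i, -, hi⟩ := hq.exists_mem_finset_dvd hqA
    exact ⟨i, (hq.associated_of_dvd (hpK i) (hq.dvd_of_dvd_pow hi)).symm.dvd⟩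
  simp only [hcast]
  constructor
  · intro h
    obtain ⟨v, hv, e, γ, hγ, rfl⟩ := exists_eq_mul_prod_pow_mul_pow_three hpK hsupp hα h
    rw [everywhereLocallySoluble_mul_pow_three hγ] at h
    obtain ⟨rfl, he⟩ :=
      eq_one_and_three_dvd_sum_of_everywhereLocallySoluble hp hinj hmod hcard hv h
    exact ⟨e, γ, he, by rw [one_mul]⟩
  · rintro ⟨e, γ, he, rfl⟩
    have hγ : γ ≠ 0 := by
      rintro rfl
      simp at hα
    exact (everywhereLocallySoluble_mul_pow_three hγ).2
      (everywhereLocallySoluble_prod hp hinj hmod he)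

/-- Lemma 2.6: let `p₁, p₂, p₃` be distinct rational primes, all `≡ 2` or
all `≡ 5 (mod 9)`, and `A = p₁²p₂²p₃²`. A class `[α] ∈ k*/(k*)³` satisfies
`C_{A,α}(k_q) ≠ ∅` for every prime `q` of `ℤ[ζ₃]` iff it lies in the subgroup generated by
`[A]` and `[p₁p₂²]`, i.e. iff `α = A^m · (p₁p₂²)^n · γ³` for some `m, n ∈ ℤ` and `γ ∈ k*`.
(This set is the `√-3`-Selmer group `S(A)`.) -/
theorem stmt7 (K : Type*) [Field K] [NumberField K] [IsCyclotomicExtension {3} ℚ K]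
    (p₁ p₂ p₃ : ℕ) (hp₁ : p₁.Prime) (hp₂ : p₂.Prime) (hp₃ : p₃.Prime)
    (hne₁₂ : p₁ ≠ p₂) (hne₂₃ : p₂ ≠ p₃) (hne₁₃ : p₁ ≠ p₃)
    (hmod : (p₁ % 9 = 2 ∧ p₂ % 9 = 2 ∧ p₃ % 9 = 2) ∨ (p₁ % 9 = 5 ∧ p₂ % 9 = 5 ∧ p₃ % 9 = 5))
    (α : K) (hα : α ≠ 0) :
    (∀ (q : 𝓞 K) (hq : Prime q),
        ∃ x y z : (primeSpec hq).adicCompletion K,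
          ¬(x = 0 ∧ y = 0 ∧ z = 0) ∧
          algebraMap K ((primeSpec hq).adicCompletion K) α * x ^ 3
            + algebraMap K ((primeSpec hq).adicCompletion K) α⁻¹ * y ^ 3
            = algebraMap K ((primeSpec hq).adicCompletion K)
                ((p₁ ^ 2 * p₂ ^ 2 * p₃ ^ 2 : ℕ) : K) * z ^ 3)
      ↔ ∃ (m n : ℤ) (γ : K),
          α = ((p₁ ^ 2 * p₂ ^ 2 * p₃ ^ 2 : ℕ) : K) ^ m * ((p₁ * p₂ ^ 2 : ℕ) : K) ^ n * γ ^ 3 := by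
  have hp : ∀ i, (![p₁, p₂, p₃] i).Prime := by simp [Fin.forall_fin_succ, *]
  have hinj : Function.Injective ![p₁, p₂, p₃] := by
    simp [Function.Injective, Fin.forall_fin_succ, *, Ne.symm]
  have hmod' : (∀ i, ![p₁, p₂, p₃] i % 9 = 2) ∨ (∀ i, ![p₁, p₂, p₃] i % 9 = 5) := by
    simpa [Fin.forall_fin_succ] using hmod
  have h := (stmt7_general K _ hp hinj hmod' (by simp) α hα).trans
    (exists_prod_pow_fin_three_iff_exists_zpow fun i => Nat.cast_ne_zero.2 (hp i).ne_zero)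
  simpa [EverywhereLocallySoluble, CubicHasPoint, Fin.prod_univ_three] using h
end

section
/- Let p₁, p₂, p₃ be rational primes such that (p₁, p₂, p₃) ≡ (2, 2, 5) (mod 9) or (p₁, p₂, p₃) ≡ (5, 5, 2) (mod 9). Then the equation x³ + p₁y³ = p₂p₃²z³ has no nontrivial ℚ₃-solution. -/
/-!
Scale a nontrivial solution of `x³ + ay³ = bz³` over `ℚ₃` to a primitive one over `ℤ₃` and reduce
it modulo `9`: some coordinate remains prime to `3`. The cubes modulo `9` are `0` and `±1`. Since
`b = p₂p₃²` is congruent to `5` or `2` modulo `9` when `a = p₁` is congruent to `2` or `5`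
respectively, the equation becomes `u + 2v ≡ 5w` or `u + 5v ≡ 2w` with `u, v, w ∈ {0, ±1}`. As
`1 + 2 + 5 < 9`, it is then an equality of integers, whose only solution is `u = v = w = 0`.
-/

open MvPolynomial

section LocalObstruction

variable {A B K R σ : Type*}

theorem eval₂_smul_of_isHomogeneous [CommSemiring A] [CommSemiring B] {F : MvPolynomial σ A}
    {n : ℕ} (hF : F.IsHomogeneous n) (f : A →+* B) (c : B) (x : σ → B) :
    eval₂ f (c • x) F = c ^ n * eval₂ f x F := by
  rw [eval₂_eq, eval₂_eq, Finset.mul_sum]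
  refine Finset.sum_congr rfl fun d hd ↦ ?_
  simp only [Pi.smul_apply, smul_eq_mul, mul_pow, Finset.prod_mul_distrib,
    Finset.prod_pow_eq_pow_sum, ← hF.degree_eq_sum_deg_support hd]
  ring

variable [CommRing A] [IsDedekindDomain A] [Field K] [Algebra A K] [IsFractionRing A K]
  [CommRing R] [Nontrivial R] [Finite σ]

theorem exists_smul_eq_algebraMap_comp_not_isNilpotent (φ : A →+* R) {x : σ → K} (hx : x ≠ 0) :
    ∃ (c : K) (y : σ → A), c • x = algebraMap A K ∘ y ∧ ∃ i, ¬ IsNilpotent (φ (y i)) := by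
  cases nonempty_fintype σ
  obtain ⟨j, hj⟩ := Function.ne_iff.mp hx
  have hJ : (nilradical R).comap φ ≠ ⊤ :=
    Ideal.comap_ne_top φ fun h ↦ not_isNilpotent_one (mem_nilradical.mp (h ▸ Submodule.mem_top))
  obtain ⟨c, hint, i, -, hi⟩ :=
    Ideal.exist_integer_multiples_notMem hJ Finset.univ x (Finset.mem_univ j) hj
  choose y hy using fun i ↦ hint i (Finset.mem_univ i)
  refine ⟨c, y, funext fun i ↦ (hy i).symm, i, fun hnil ↦ hi ?_⟩
  exact (FractionalIdeal.mem_coeIdeal _).mpr ⟨y i, mem_nilradical.mpr hnil, hy i⟩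

theorem eq_zero_of_aeval_eq_zero_of_forall_isNilpotent {F : MvPolynomial σ A} {n : ℕ}
    (hF : F.IsHomogeneous n) (φ : A →+* R)
    (hnil : ∀ r : σ → R, eval₂ φ r F = 0 → ∀ i, IsNilpotent (r i))
    {x : σ → K} (hx : aeval x F = 0) : x = 0 := by
  by_contra hne
  obtain ⟨c, y, hcy, i, hi⟩ := exists_smul_eq_algebraMap_comp_not_isNilpotent φ hne
  have hy : eval y F = 0 := by
    apply IsFractionRing.injective A K
    rw [eval₂_comp, ← hcy, eval₂_smul_of_isHomogeneous hF, ← aeval_def, hx, mul_zero, map_zero]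
  exact hi (hnil (φ ∘ y) (by rw [← eval₂_comp, hy, map_zero]) i)

end LocalObstruction

section TernaryCubic

variable {A B : Type*} [CommRing A] [CommRing B]

/-- The ternary cubic form `X₀³ + a X₁³ - b X₂³`, whose zeros are the solutions of
`x³ + ay³ = bz³`. -/
noncomputable def ternaryCubic (a b : A) : MvPolynomial (Fin 3) A :=
  X 0 ^ 3 + C a * X 1 ^ 3 - C b * X 2 ^ 3

theorem ternaryCubic_isHomogeneous (a b : A) : (ternaryCubic a b).IsHomogeneous 3 :=
  ((isHomogeneous_X_pow 0 3).add (isHomogeneous_C_mul_X_pow a 1 3)).sub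
    (isHomogeneous_C_mul_X_pow b 2 3)

theorem eval₂_ternaryCubic_eq_zero_iff (f : A →+* B) (a b : A) (v : Fin 3 → B) :
    eval₂ f v (ternaryCubic a b) = 0 ↔ v 0 ^ 3 + f a * v 1 ^ 3 = f b * v 2 ^ 3 := by
  simp [ternaryCubic, sub_eq_zero]

end TernaryCubic

theorem zmod_nine_cube_eq (t : ZMod 9) : t ^ 3 = 0 ∨ t ^ 3 = 1 ∨ t ^ 3 = -1 := by
  decide +revert

theorem zmod_nine_cubes_eq_zero {a b x y z : ZMod 9} (hab : a = 2 ∧ b = 5 ∨ a = 5 ∧ b = 2)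
    (h : x ^ 3 + a * y ^ 3 = b * z ^ 3) : x ^ 3 = 0 ∧ y ^ 3 = 0 ∧ z ^ 3 = 0 := by
  rcases hab with ⟨rfl, rfl⟩ | ⟨rfl, rfl⟩ <;>
  rcases zmod_nine_cube_eq x with hx | hx | hx <;>
  rcases zmod_nine_cube_eq y with hy | hy | hy <;>
  rcases zmod_nine_cube_eq z with hz | hz | hz <;>
  rw [hx, hy, hz] at h ⊢ <;> revert h <;> decide

theorem toZModPow_natCast_eq_of_modEq {p : ℕ} [Fact p.Prime] {n k l : ℕ} (h : k ≡ l [MOD p ^ n]) :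
    PadicInt.toZModPow n (k : ℤ_[p]) = l := by
  rw [map_natCast]
  exact (ZMod.natCast_eq_natCast_iff k l (p ^ n)).mpr h

theorem toZModPow_coeffs_of_mod_nine {p₁ p₂ p₃ : ℕ}
    (hmod : (p₁ % 9 = 2 ∧ p₂ % 9 = 2 ∧ p₃ % 9 = 5) ∨ (p₁ % 9 = 5 ∧ p₂ % 9 = 5 ∧ p₃ % 9 = 2)) :
    PadicInt.toZModPow 2 (p₁ : ℤ_[3]) = 2 ∧
        PadicInt.toZModPow 2 ((p₂ * p₃ ^ 2 : ℕ) : ℤ_[3]) = 5 ∨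
      PadicInt.toZModPow 2 (p₁ : ℤ_[3]) = 5 ∧
        PadicInt.toZModPow 2 ((p₂ * p₃ ^ 2 : ℕ) : ℤ_[3]) = 2 := by
  rcases hmod with ⟨h₁, h₂, h₃⟩ | ⟨h₁, h₂, h₃⟩
  · have h : p₂ * p₃ ^ 2 ≡ 2 * 5 ^ 2 [MOD 9] := Nat.ModEq.mul h₂ (Nat.ModEq.pow 2 h₃)
    exact .inl ⟨toZModPow_natCast_eq_of_modEq h₁, toZModPow_natCast_eq_of_modEq h⟩
  · have h : p₂ * p₃ ^ 2 ≡ 5 * 2 ^ 2 [MOD 9] := Nat.ModEq.mul h₂ (Nat.ModEq.pow 2 h₃)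
    exact .inr ⟨toZModPow_natCast_eq_of_modEq h₁, toZModPow_natCast_eq_of_modEq h⟩

theorem stmt9_general {a b : ℤ_[3]}
    (hab : PadicInt.toZModPow 2 a = 2 ∧ PadicInt.toZModPow 2 b = 5 ∨
      PadicInt.toZModPow 2 a = 5 ∧ PadicInt.toZModPow 2 b = 2) :
    ¬ ∃ x y z : ℚ_[3], ¬(x = 0 ∧ y = 0 ∧ z = 0) ∧ x ^ 3 + a * y ^ 3 = b * z ^ 3 := by
  rintro ⟨x, y, z, hne, h⟩
  have : Nontrivial (ZMod (3 ^ 2)) := ZMod.nontrivial_iff.mpr (by decide)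
  have hnil (r : Fin 3 → ZMod (3 ^ 2))
      (hr : eval₂ (PadicInt.toZModPow 2) r (ternaryCubic a b) = 0) (i : Fin 3) :
      IsNilpotent (r i) := by
    obtain ⟨h₀, h₁, h₂⟩ :=
      zmod_nine_cubes_eq_zero hab ((eval₂_ternaryCubic_eq_zero_iff _ a b r).mp hr)
    fin_cases i
    exacts [⟨3, h₀⟩, ⟨3, h₁⟩, ⟨3, h₂⟩]
  have hzero : aeval ![x, y, z] (ternaryCubic a b) = 0 :=
    (eval₂_ternaryCubic_eq_zero_iff (algebraMap ℤ_[3] ℚ_[3]) a b _).mpr h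
  have hxyz := eq_zero_of_aeval_eq_zero_of_forall_isNilpotent
    (ternaryCubic_isHomogeneous a b) _ hnil hzero
  exact hne ⟨congrFun hxyz 0, congrFun hxyz 1, congrFun hxyz 2⟩

/-- if `p₁, p₂, p₃` are rational primes with `(p₁,p₂,p₃) ≡ (2,2,5)` or
`(5,5,2) (mod 9)`, then `x³ + p₁ y³ = p₂ p₃² z³` has no nontrivial `ℚ₃`-solution. -/
theorem stmt9 (p₁ p₂ p₃ : ℕ) (hp₁ : p₁.Prime) (hp₂ : p₂.Prime) (hp₃ : p₃.Prime)
    (hmod : (p₁ % 9 = 2 ∧ p₂ % 9 = 2 ∧ p₃ % 9 = 5) ∨ (p₁ % 9 = 5 ∧ p₂ % 9 = 5 ∧ p₃ % 9 = 2)) :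
    ¬ ∃ x y z : ℚ_[3], ¬(x = 0 ∧ y = 0 ∧ z = 0) ∧
        x ^ 3 + (p₁ : ℚ_[3]) * y ^ 3 = (p₂ : ℚ_[3]) * (p₃ : ℚ_[3]) ^ 2 * z ^ 3 := by
  simpa using stmt9_general (toZModPow_coeffs_of_mod_nine hmod)
end

section
/- Let p be a rational prime with p ≡ 2 (mod 9) or p ≡ 5 (mod 9) (so in particular p ≡ 2 (mod 3) and p is inert in ℤ[ζ₃]). Then there is no (x,y,z) ∈ k_p³ ∖ {(0,0,0)} with ζ₃x³ + ζ₃²y³ = p²z³; that is, the curve ζ₃x³ + ζ₃²y³ = p²z³ has no k_p-rational point. -/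
/-!
Let `q` be the order of the residue field and let `3 ∤ v(c)`. In a nontrivial solution of
`ζ x³ + ζ² y³ = c z³` the valuation of the right side is never that of a nonzero cube, so the
two terms on the left must cancel to leading order: `x` and `y` have the same valuation and
`t = x / y` satisfies `ζ t³ + ζ² ≡ 0`, that is `(-t)³ ≡ ζ`, in the residue field. Since `3 ∤ q`,
the reduction of `ζ` still has order `3`, hence `-t` has order `9` and `9 ∣ q - 1`. For `c = p²`
with `p` inert in `ℤ[ζ₃]` we have `q = p²`, which is `4` or `7` modulo `9` when `p ≡ 2, 5 (mod 9)`.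
The argument works for every odd exponent `n` in place of `3`, when `n ∤ v(c)`.
-/

open NumberField IsDedekindDomain

section RootsOfUnity

theorem isPrimitiveRoot_map_of_natCast_ne_zero {R S : Type*} [CommRing R] [IsDomain R]
    [CommRing S] [IsDomain S] (f : R →+* S) {n : ℕ} (hn : (n : S) ≠ 0) {ζ : R}
    (hζ : IsPrimitiveRoot ζ n) : IsPrimitiveRoot (f ζ) n := by
  have : NeZero (n : S) := ⟨hn⟩
  have hn0 : n ≠ 0 := by
    rintro rfl
    exact hn Nat.cast_zero
  rw [← Polynomial.isRoot_cyclotomic_iff, ← Polynomial.map_cyclotomic n f]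
  exact (hζ.isRoot_cyclotomic (Nat.pos_of_ne_zero hn0)).map

theorem isPrimitiveRoot_sq_of_pow {M : Type*} [CommMonoid M] {n : ℕ} {b : M}
    (hn : n ≠ 0) (h : IsPrimitiveRoot (b ^ n) n) : IsPrimitiveRoot b (n ^ 2) := by
  have horder : n = orderOf b / (orderOf b).gcd n := by rw [← orderOf_pow' b hn, ← h.eq_orderOf]
  have hmul : n * (orderOf b).gcd n = orderOf b := by
    conv_lhs => enter [1]; rw [horder]
    exact Nat.div_mul_cancel (Nat.gcd_dvd_left _ _)
  have hgcd : (orderOf b).gcd n = n := Nat.gcd_eq_right (Dvd.intro _ hmul)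
  rw [hgcd] at hmul
  rw [sq, hmul]
  exact IsPrimitiveRoot.orderOf b

end RootsOfUnity

section FiniteField

variable {k : Type*} [Field k] [Finite k] {n : ℕ}

theorem natCast_ne_zero_of_coprime_natCard (hn : (Nat.card k).Coprime n) : (n : k) ≠ 0 := by
  intro h0
  have : Fintype k := Fintype.ofFinite k
  have hq : ((Nat.card k : ℕ) : k) = 0 := by
    rw [Nat.card_eq_fintype_card, FiniteField.cast_card_eq_zero]
  simpa [hq, h0] using hn.cast (R := k)

theorem natCard_modEq_one_of_isPrimitiveRoot {b : k} (hn : n ≠ 0) (hb : IsPrimitiveRoot b n) :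
    Nat.card k ≡ 1 [MOD n] := by
  have : Fintype k := Fintype.ofFinite k
  refine ((Nat.modEq_iff_dvd' Nat.card_pos).mpr ?_).symm
  refine hb.dvd_of_pow_eq_one _ ?_
  rw [Nat.card_eq_fintype_card]
  exact FiniteField.pow_card_sub_one_eq_one b (hb.ne_zero hn)

theorem natCard_modEq_one_of_isPrimitiveRoot_pow {b : k} (hn : n ≠ 0)
    (hb : IsPrimitiveRoot (b ^ n) n) : Nat.card k ≡ 1 [MOD n ^ 2] :=
  natCard_modEq_one_of_isPrimitiveRoot (pow_ne_zero 2 hn) (isPrimitiveRoot_sq_of_pow hn hb)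

end FiniteField

section Valuation

variable {F Γ₀ : Type*} [Field F] [LinearOrderedCommGroupWithZero Γ₀] {V : Valuation F Γ₀}
  {u w c x y z : F} {n : ℕ}

theorem eq_zero_of_valuation_mul_pow_eq_pow (hc : ∀ γ, γ ^ n ≠ V c) {γ : Γ₀}
    (h : V (c * z ^ n) = γ ^ n) : z = 0 := by
  by_contra hz
  have hVz : V z ≠ 0 := V.ne_zero_iff.mpr hz
  refine hc (γ / V z) ?_
  rw [div_pow, ← h, map_mul, map_pow, mul_div_cancel_right₀ _ (pow_ne_zero n hVz)]

theorem valuation_eq_of_mul_pow_add_mul_pow_eq (hn : n ≠ 0) (hu : V u = 1) (hw : V w = 1)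
    (hc : ∀ γ, γ ^ n ≠ V c) (h : u * x ^ n + w * y ^ n = c * z ^ n) : V x = V y := by
  by_contra hxy
  have hne : V (u * x ^ n) ≠ V (w * y ^ n) := by
    simpa only [map_mul, map_pow, hu, hw, one_mul] using
      (pow_left_inj₀ zero_le zero_le hn).not.mpr hxy
  have hmax : V (c * z ^ n) = max (V x) (V y) ^ n := by
    rw [← h, V.map_add_of_distinct_val hne]
    simp [hu, hw, (pow_left_mono n).map_max]
  obtain rfl : z = 0 := eq_zero_of_valuation_mul_pow_eq_pow hc hmax
  have hmax0 : max (V x) (V y) = 0 := by simpa [hn] using hmax.symm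
  have hx : V x = 0 := le_zero_iff.mp (hmax0 ▸ le_max_left _ _)
  have hy : V y = 0 := le_zero_iff.mp (hmax0 ▸ le_max_right _ _)
  exact hxy (hx.trans hy.symm)

theorem valuation_mul_pow_lt_of_mul_pow_add_mul_pow_eq (hn : n ≠ 0) (hu : V u = 1) (hw : V w = 1)
    (hc : ∀ γ, γ ^ n ≠ V c) (hne : ¬(x = 0 ∧ y = 0 ∧ z = 0))
    (h : u * x ^ n + w * y ^ n = c * z ^ n) : V (c * z ^ n) < V y ^ n := by
  have hxy : V x = V y := valuation_eq_of_mul_pow_add_mul_pow_eq hn hu hw hc h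
  refine lt_of_le_of_ne ?_ fun heq ↦ hne ?_
  · rw [← h]
    exact V.map_add_le (by simp [hu, hxy]) (by simp [hw])
  · obtain rfl : z = 0 := eq_zero_of_valuation_mul_pow_eq_pow hc heq
    have hy : y = 0 := by simpa [hn] using heq.symm
    have hx : x = 0 := by simpa [hy] using hxy
    exact ⟨hx, hy, rfl⟩

variable {A : Type*} [CommRing A] [Algebra A F]

theorem residue_eq_zero_iff_valuation_lt_one [IsLocalRing A] (hA : V.Integers A) {a : A} :
    IsLocalRing.residue A a = 0 ↔ V (algebraMap A F a) < 1 := by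
  rw [IsLocalRing.residue_eq_zero_iff, IsLocalRing.mem_maximalIdeal, mem_nonunits_iff,
    hA.isUnit_iff_valuation_eq_one, (hA.map_le_one a).lt_iff_ne]

theorem exists_residue_mul_pow_add_residue_eq_zero [IsLocalRing A] (hA : V.Integers A)
    {a b : A} (ha : IsUnit a) (hb : IsUnit b) (hn : n ≠ 0) (hc : ∀ γ, γ ^ n ≠ V c)
    (hne : ¬(x = 0 ∧ y = 0 ∧ z = 0))
    (h : algebraMap A F a * x ^ n + algebraMap A F b * y ^ n = c * z ^ n) :
    ∃ t : IsLocalRing.ResidueField A,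
      IsLocalRing.residue A a * t ^ n + IsLocalRing.residue A b = 0 := by
  have hVa := hA.one_of_isUnit ha
  have hVb := hA.one_of_isUnit hb
  have hlt := valuation_mul_pow_lt_of_mul_pow_add_mul_pow_eq hn hVa hVb hc hne h
  have hVy : V y ≠ 0 := by
    intro hy
    simp [hy, hn] at hlt
  have hy : y ≠ 0 := V.ne_zero_iff.mp hVy
  obtain ⟨t, ht⟩ : ∃ t : A, algebraMap A F t = x / y := hA.exists_of_le_one <| by
    rw [map_div₀, valuation_eq_of_mul_pow_add_mul_pow_eq hn hVa hVb hc h, div_self hVy]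
  refine ⟨IsLocalRing.residue A t, ?_⟩
  have hdiv : algebraMap A F (a * t ^ n + b) = c * z ^ n / y ^ n := by
    rw [← h, map_add, map_mul, map_pow, ht, div_pow]
    field_simp
  rw [← map_pow, ← map_mul, ← map_add, residue_eq_zero_iff_valuation_lt_one hA, hdiv, map_div₀,
    map_pow]
  exact (div_lt_one₀ (pow_pos (zero_lt_iff.mpr hVy) n)).mpr hlt

theorem exists_isPrimitiveRoot_algebraMap_eq (hA : V.Integers A) (hn : n ≠ 0) {ζ : F}
    (hζ : IsPrimitiveRoot ζ n) :
    ∃ ξ : A, IsPrimitiveRoot ξ n ∧ algebraMap A F ξ = ζ := by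
  have hVζ : V ζ = 1 := by
    rw [← pow_eq_one_iff_of_nonneg zero_le hn, ← map_pow, hζ.pow_eq_one, map_one]
  obtain ⟨ξ, rfl⟩ := hA.exists_of_le_one hVζ.le
  exact ⟨ξ, hζ.of_map_of_injective hA.hom_inj, rfl⟩

theorem not_exists_mul_pow_add_sq_mul_pow_eq [IsLocalRing A] (hA : V.Integers A)
    [Finite (IsLocalRing.ResidueField A)] (hn : Odd n) {ζ : F} (hζ : IsPrimitiveRoot ζ n)
    (hcop : (Nat.card (IsLocalRing.ResidueField A)).Coprime n)
    (hcard : ¬ Nat.card (IsLocalRing.ResidueField A) ≡ 1 [MOD n ^ 2])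
    (hc : ∀ γ, γ ^ n ≠ V c) :
    ¬ ∃ x y z : F, ¬(x = 0 ∧ y = 0 ∧ z = 0) ∧ ζ * x ^ n + ζ ^ 2 * y ^ n = c * z ^ n := by
  rintro ⟨x, y, z, hne, h⟩
  have hn0 : n ≠ 0 := hn.pos.ne'
  obtain ⟨ξ, hξ, rfl⟩ := exists_isPrimitiveRoot_algebraMap_eq hA hn0 hζ
  have hunit : IsUnit ξ := hξ.isUnit hn0
  rw [← map_pow] at h
  obtain ⟨t, ht⟩ :=
    exists_residue_mul_pow_add_residue_eq_zero hA hunit (hunit.pow 2) hn0 hc hne h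
  have : IsDomain A := hA.hom_inj.isDomain
  have hresidue : IsPrimitiveRoot (IsLocalRing.residue A ξ) n :=
    isPrimitiveRoot_map_of_natCast_ne_zero _ (natCast_ne_zero_of_coprime_natCard hcop) hξ
  have hroot : (-t) ^ n = IsLocalRing.residue A ξ := by
    apply mul_left_cancel₀ (hresidue.ne_zero hn0)
    rw [map_pow] at ht
    rw [hn.neg_pow]
    linear_combination -ht
  exact hcard (natCard_modEq_one_of_isPrimitiveRoot_pow hn0 (hroot ▸ hresidue))

end Valuation

section AdicCompletion

open HeightOneSpectrum

variable {R : Type*} [CommRing R] [IsDedekindDomain R] (K : Type*) [Field K] [Algebra R K]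
  [IsFractionRing R K] (v : HeightOneSpectrum R)

theorem valued_algebraMap_adicCompletion (a : K) :
    Valued.v (algebraMap K (v.adicCompletion K) a) = v.valuation K a :=
  v.valuedAdicCompletion_eq_valuation' a

theorem exists_valued_sub_algebraMap_lt_one {x : v.adicCompletion K} (hx : Valued.v x ≤ 1) :
    ∃ r : R, Valued.v (x - algebraMap R (v.adicCompletion K) r) < 1 := by
  have hnhds : {s : v.adicCompletion K | Valued.v (s - x) < 1} ∈ nhds x :=
    Valued.mem_nhds.mpr ⟨1, fun s hs ↦ by simpa using hs⟩
  obtain ⟨a, ha⟩ := (v.denseRange_algebraMap K).mem_nhds hnhds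
  have ha_le : v.valuation K a ≤ 1 := by
    rw [← valued_algebraMap_adicCompletion, ← sub_add_cancel (algebraMap K _ a) x]
    exact Valued.v.map_add_le ha.le hx
  obtain ⟨r, hr⟩ := v.exists_valuation_sub_lt_of_integer ha_le 1
  rw [Units.val_one, ← valued_algebraMap_adicCompletion, map_sub] at hr
  refine ⟨r, ?_⟩
  rw [Valuation.map_sub_swap, ← sub_add_sub_cancel _ (algebraMap K (v.adicCompletion K) a)]
  exact Valued.v.map_add_lt hr ha

theorem residue_comp_algebraMap_adicCompletionIntegers_surjective :
    Function.Surjective ((IsLocalRing.residue (v.adicCompletionIntegers K)).comp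
      (algebraMap R (v.adicCompletionIntegers K))) := by
  intro s
  obtain ⟨⟨x, hx⟩, rfl⟩ := IsLocalRing.residue_surjective s
  obtain ⟨r, hr⟩ := exists_valued_sub_algebraMap_lt_one K v hx
  refine ⟨r, ?_⟩
  rw [RingHom.comp_apply, ← sub_eq_zero, ← map_sub,
    residue_eq_zero_iff_valuation_lt_one (adicCompletionIntegers.integers K v)]
  exact (Valuation.map_sub_swap _ _ _).trans_lt hr

theorem ker_residue_comp_algebraMap_adicCompletionIntegers :
    RingHom.ker ((IsLocalRing.residue (v.adicCompletionIntegers K)).comp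
      (algebraMap R (v.adicCompletionIntegers K))) = v.asIdeal := by
  ext r
  rw [RingHom.mem_ker, RingHom.comp_apply,
    residue_eq_zero_iff_valuation_lt_one (adicCompletionIntegers.integers K v),
    ← v.valuation_lt_one_iff_mem (K := K), ← valued_algebraMap_adicCompletion]
  rfl

/-- The identification of `R ⧸ v` with the residue field of the `v`-adic completion, induced by the
map from `R` to the ring of integers of the completion. It transfers the order of `R ⧸ v`. -/
noncomputable def quotientEquivResidueFieldAdicCompletion :
    R ⧸ v.asIdeal ≃+* IsLocalRing.ResidueField (v.adicCompletionIntegers K) :=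
  (Ideal.quotEquivOfEq (ker_residue_comp_algebraMap_adicCompletionIntegers K v).symm).trans
    (RingHom.quotientKerEquivOfSurjective
      (residue_comp_algebraMap_adicCompletionIntegers_surjective K v))

instance finite_residueField_adicCompletionIntegers [Finite (R ⧸ v.asIdeal)] :
    Finite (IsLocalRing.ResidueField (v.adicCompletionIntegers K)) :=
  Finite.of_equiv _ (quotientEquivResidueFieldAdicCompletion K v).toEquiv

theorem natCard_residueField_adicCompletionIntegers :
    Nat.card (IsLocalRing.ResidueField (v.adicCompletionIntegers K)) = Nat.card (R ⧸ v.asIdeal) :=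
  Nat.card_congr (quotientEquivResidueFieldAdicCompletion K v).toEquiv.symm

theorem pow_ne_of_not_dvd_log {n : ℕ} {δ : WithZero (Multiplicative ℤ)}
    (h : ¬ (n : ℤ) ∣ WithZero.log δ) (γ : WithZero (Multiplicative ℤ)) : γ ^ n ≠ δ := by
  rintro rfl
  simp [WithZero.log_pow] at h

theorem stmt11_general [Finite (R ⧸ v.asIdeal)] {n : ℕ} (hn : Odd n) {ζ c : K}
    (hζ : IsPrimitiveRoot ζ n) (hcop : (Nat.card (R ⧸ v.asIdeal)).Coprime n)
    (hcard : ¬ Nat.card (R ⧸ v.asIdeal) ≡ 1 [MOD n ^ 2])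
    (hc : ¬ (n : ℤ) ∣ WithZero.log (v.valuation K c)) :
    ¬ ∃ x y z : v.adicCompletion K,
        ¬(x = 0 ∧ y = 0 ∧ z = 0) ∧
        algebraMap K (v.adicCompletion K) ζ * x ^ n
          + algebraMap K (v.adicCompletion K) (ζ ^ 2) * y ^ n
          = algebraMap K (v.adicCompletion K) c * z ^ n := by
  rw [← natCard_residueField_adicCompletionIntegers K v] at hcop hcard
  rw [← valued_algebraMap_adicCompletion] at hc
  rw [map_pow]
  exact not_exists_mul_pow_add_sq_mul_pow_eq (adicCompletionIntegers.integers K v) hn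
    (hζ.map_of_injective (algebraMap K _).injective) hcop hcard (pow_ne_of_not_dvd_log hc)

end AdicCompletion

section InertPrime

open HeightOneSpectrum

theorem log_valuation_natCast_pow_primeSpec {R : Type*} [CommRing R] [IsDedekindDomain R]
    (K : Type*) [Field K] [Algebra R K] [IsFractionRing R K] {p : ℕ} (hp : Prime (p : R)) (m : ℕ) :
    WithZero.log ((primeSpec hp).valuation K ((p : K) ^ m)) = -m := by
  rw [map_pow, ← map_natCast (algebraMap R K), valuation_of_algebraMap,
    (primeSpec hp).intValuation_singleton hp.ne_zero rfl, WithZero.log_pow, WithZero.log_exp,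
    nsmul_eq_mul, mul_neg_one]

theorem natCard_quotient_primeSpec_natCast {K : Type*} [Field K] [NumberField K] {p : ℕ}
    (hp : Prime (p : 𝓞 K)) :
    Nat.card (𝓞 K ⧸ (primeSpec hp).asIdeal) = p ^ Module.finrank ℚ K := by
  rw [← RingOfIntegers.rank, ← Ideal.absNorm_span_natCast]
  rfl

theorem natCard_quotient_primeSpec_of_isCyclotomicExtension_three {K : Type*} [Field K]
    [NumberField K] [IsCyclotomicExtension {3} ℚ K] {p : ℕ} (hp : Prime (p : 𝓞 K)) :
    Nat.card (𝓞 K ⧸ (primeSpec hp).asIdeal) = p ^ 2 := by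
  rw [natCard_quotient_primeSpec_natCast, IsCyclotomicExtension.finrank (n := 3) K
    (Polynomial.cyclotomic.irreducible_rat three_pos), Nat.totient_prime Nat.prime_three]

theorem sq_mod_nine {p : ℕ} (hmod : p % 9 = 2 ∨ p % 9 = 5) : p ^ 2 % 9 = 4 ∨ p ^ 2 % 9 = 7 := by
  rcases hmod with h | h <;> simp [Nat.pow_mod, h]

theorem sq_coprime_three {p : ℕ} (hmod : p % 9 = 2 ∨ p % 9 = 5) : (p ^ 2).Coprime 3 := by
  rw [Nat.coprime_comm, Nat.prime_three.coprime_iff_not_dvd]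
  have := sq_mod_nine hmod
  lia

theorem not_sq_modEq_one {p : ℕ} (hmod : p % 9 = 2 ∨ p % 9 = 5) : ¬ p ^ 2 ≡ 1 [MOD 3 ^ 2] := by
  rw [Nat.ModEq]
  have := sq_mod_nine hmod
  lia

end InertPrime

/-- let `p` be a rational prime with `p ≡ 2` or `5 (mod 9)` (so `p ≡ 2
(mod 3)` and `p` is inert in `ℤ[ζ₃]`). Then the curve `ζ₃ x³ + ζ₃² y³ = p² z³` has no
`k_p`-rational point. -/
theorem stmt11 (K : Type*) [Field K] [NumberField K] [IsCyclotomicExtension {3} ℚ K]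
    (ζ : K) (hζ : IsPrimitiveRoot ζ 3)
    (p : ℕ) (hp : p.Prime) (hmod : p % 9 = 2 ∨ p % 9 = 5)
    (hpin : Prime ((p : 𝓞 K))) :
    ¬ ∃ x y z : (primeSpec hpin).adicCompletion K,
        ¬(x = 0 ∧ y = 0 ∧ z = 0) ∧
        algebraMap K ((primeSpec hpin).adicCompletion K) ζ * x ^ 3
          + algebraMap K ((primeSpec hpin).adicCompletion K) (ζ ^ 2) * y ^ 3
          = algebraMap K ((primeSpec hpin).adicCompletion K) ((p : K) ^ 2) * z ^ 3 := by
  have := (primeSpec hpin).isMaximal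
  have hcard := natCard_quotient_primeSpec_of_isCyclotomicExtension_three hpin
  exact stmt11_general K _ (by decide) hζ (hcard ▸ sq_coprime_three hmod)
    (hcard ▸ not_sq_modEq_one hmod) (log_valuation_natCast_pow_primeSpec K hpin 2 ▸ by norm_num)
end

section
/- Let b and c be units of ℤ₃ (i.e., 3-adic integers not divisible by 3). Then the equation x³ + 3by³ = 9cz³ has no nontrivial ℚ₃-solution. -/
/-!
If a finite sum vanishes, the largest value of a valuation on its terms is attained at least twice,
unless all the terms have value zero. For a uniformizer `π`, units `b`, `c` and an exponent `n ≥ 3`,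
the nonzero ones among `x ^ n`, `π * b * y ^ n` and `π ^ 2 * c * z ^ n` have values in different
classes modulo `n`-th powers, so no two of them have the same value.
-/

open WithZero

section Valuation

variable {R ι : Type*} [Ring R] {s : Finset ι}

theorem valuation_eq_zero_of_sum_eq_zero {Γ₀ : Type*} [LinearOrderedCommMonoidWithZero Γ₀]
    (v : Valuation R Γ₀) {f : ι → R}
    (hf : (s : Set ι).Pairwise fun i j ↦ v (f i) = v (f j) → v (f i) = 0)
    (hsum : ∑ i ∈ s, f i = 0) : ∀ i ∈ s, v (f i) = 0 := by
  classical
  intro i hi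
  obtain ⟨j, hj, hmax⟩ := s.exists_max_image (fun k ↦ v (f k)) ⟨i, hi⟩
  suffices hj0 : v (f j) = 0 from le_zero_iff.mp (hj0 ▸ hmax i hi)
  by_contra hj0
  have hlt : ∀ k ∈ s \ {j}, v (f k) < v (f j) := by
    intro k hk
    obtain ⟨hks, hkj⟩ : k ∈ s ∧ k ≠ j := by simpa using hk
    exact (hmax k hks).lt_of_ne fun h ↦ hj0 (h ▸ hf hks hj hkj h)
  exact hj0 (by rw [← v.map_sum_eq_of_lt hj hlt, hsum, v.map_zero])

theorem log_modEq_log_of_mul_pow_eq_mul_pow {α β ξ η : ℤᵐ⁰} {n : ℕ}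
    (h : α * ξ ^ n = β * η ^ n) (h0 : α * ξ ^ n ≠ 0) : log α ≡ log β [ZMOD n] := by
  have h0' : β * η ^ n ≠ 0 := h ▸ h0
  have hlog : log α + n * log ξ = log β + n * log η := by
    simpa [log_mul, left_ne_zero_of_mul h0, right_ne_zero_of_mul h0, left_ne_zero_of_mul h0',
      right_ne_zero_of_mul h0'] using congrArg log h
  exact Int.modEq_iff_dvd.mpr ⟨log ξ - log η, by linear_combination -hlog⟩

theorem valuation_mul_pow_eq_zero_of_sum_eq_zero (v : Valuation R ℤᵐ⁰) {a x : ι → R} {n : ℕ}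
    (ha : (s : Set ι).Pairwise fun i j ↦ ¬ log (v (a i)) ≡ log (v (a j)) [ZMOD n])
    (hsum : ∑ i ∈ s, a i * x i ^ n = 0) : ∀ i ∈ s, v (a i * x i ^ n) = 0 := by
  refine valuation_eq_zero_of_sum_eq_zero v (fun i hi j hj hij h ↦ ?_) hsum
  simp only [map_mul, map_pow] at h ⊢
  by_contra h0
  exact ha hi hj hij (log_modEq_log_of_mul_pow_eq_mul_pow h h0)

end Valuation

section Uniformizer

variable {K : Type*} [DivisionRing K] (v : Valuation K ℤᵐ⁰) {π : K} {n : ℕ}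

theorem eq_zero_of_sum_uniformizer_pow_mul_pow_eq_zero (hπ : v π = exp (-1)) {m : ℕ} (hmn : m ≤ n)
    {u x : Fin m → K} (hu : ∀ i, v (u i) = 1)
    (hsum : ∑ i : Fin m, π ^ (i : ℕ) * u i * x i ^ n = 0) (i : Fin m) : x i = 0 := by
  have hv (i : Fin m) : v (π ^ (i : ℕ) * u i) = exp (-(i : ℤ)) := by
    simp [hπ, hu, ← exp_nsmul]
  have hclass : ((Finset.univ : Finset (Fin m)) : Set (Fin m)).Pairwise fun i j ↦
      ¬ log (v (π ^ (i : ℕ) * u i)) ≡ log (v (π ^ (j : ℕ) * u j)) [ZMOD n] := by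
    intro i _ j _ hij h
    rw [hv, hv, log_exp, log_exp, Int.neg_modEq_neg, Int.natCast_modEq_iff] at h
    exact hij (Fin.ext (h.eq_of_lt_of_lt (i.2.trans_le hmn) (j.2.trans_le hmn)))
  have hterm : v (π ^ (i : ℕ) * u i * x i ^ n) = 0 :=
    valuation_mul_pow_eq_zero_of_sum_eq_zero v hclass hsum i (Finset.mem_univ i)
  rw [map_mul, hv, mul_eq_zero_iff_left exp_ne_zero, v.zero_iff] at hterm
  exact eq_zero_of_pow_eq_zero hterm

theorem stmt12_general (hπ : v π = exp (-1)) (hn : 3 ≤ n) {b c : K} (hb : v b = 1) (hc : v c = 1) :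
    ¬ ∃ x y z : K, ¬(x = 0 ∧ y = 0 ∧ z = 0) ∧
        x ^ n + π * b * y ^ n = π ^ 2 * c * z ^ n := by
  rintro ⟨x, y, z, hne, h⟩
  have hzero : ∀ i, ![x, y, z] i = 0 :=
    eq_zero_of_sum_uniformizer_pow_mul_pow_eq_zero v hπ hn (u := ![1, b, -c])
      (by simp [Fin.forall_fin_succ, hb, hc]) (by simp [Fin.sum_univ_three, h])
  exact hne ⟨hzero 0, hzero 1, hzero 2⟩

end Uniformizer

section Padic

variable {p : ℕ} [Fact p.Prime]

theorem mulValuation_p : Padic.mulValuation (p : ℚ_[p]) = exp (-1) := by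
  simp [(Fact.out : p.Prime).ne_zero]

theorem mulValuation_eq_one_of_not_dvd {b : ℤ_[p]} (hb : ¬ (p : ℤ_[p]) ∣ b) :
    Padic.mulValuation (b : ℚ_[p]) = 1 := by
  have hb0 : b ≠ 0 := fun h ↦ hb (h ▸ dvd_zero _)
  have hval : b.valuation = 0 := by
    rwa [← pow_one (p : ℤ_[p]), ← Ideal.mem_span_singleton,
      PadicInt.mem_span_pow_iff_le_valuation b hb0, Nat.one_le_iff_ne_zero, not_not] at hb
  simp [hb0, hval]

end Padic

/-- if `b, c` are units of `ℤ₃` (3-adic integers not divisible by `3`),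
then `x³ + 3b y³ = 9c z³` has no nontrivial `ℚ₃`-solution. -/
theorem stmt12 (b c : ℤ_[3]) (hb : ¬ (3 : ℤ_[3]) ∣ b) (hc : ¬ (3 : ℤ_[3]) ∣ c) :
    ¬ ∃ x y z : ℚ_[3], ¬(x = 0 ∧ y = 0 ∧ z = 0) ∧
        x ^ 3 + 3 * (b : ℚ_[3]) * y ^ 3 = 9 * (c : ℚ_[3]) * z ^ 3 := by
  rw [show (9 : ℚ_[3]) = 3 ^ 2 by norm_num]
  exact stmt12_general _ mulValuation_p le_rfl (mulValuation_eq_one_of_not_dvd hb)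
    (mulValuation_eq_one_of_not_dvd hc)
end

section
/- Let i, j, k ∈ {0, 1, 2}. The equation 3^k x³ + 2^i y³ = 2^j z³ has a nontrivial ℚ₃-solution if and only if one of the following holds: (k = 0 and {i, j} ≠ {1, 2}), or k = 1, or (k = 2 and i = j). -/
/-!
Over `ℤ_p` with `p` odd, Hensel's lemma makes every `u ≡ 1 mod p²` a `p`-th power, so the class of
a unit modulo `p`-th powers is read off its `(p - 1)`-st power modulo `p²`. For units `a`, `b`, `c`:

* `p * a * x ^ p + b * y ^ p = c * z ^ p` always has a solution: for `y = c / b` Fermat's little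
  theorem gives `b * y ^ p = c + p * s`, and `x = -s / a` brings the left side to `c` modulo `p²`.
* If `2 ≤ k < p`, a primitive solution of `p ^ k * a * x ^ p + b * y ^ p = c * z ^ p` has `y` and
  `z` units, and modulo `p²` it says that `b` and `c` have the same class.
* A primitive solution of `a * x ^ 3 + b * y ^ 3 = c * z ^ 3` over `ℤ_3` forces two of the three
  coefficients into one class: the terms are `0` or units modulo `9`, and of three units modulo `9`
  one of which is the sum of the other two, some two agree up to sign.
-/

/-- The diagonal equation `a xⁿ + b yⁿ = c zⁿ` has a nontrivial solution in `R`. -/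
def DiagonalSoluble {R : Type*} [Semiring R] (n : ℕ) (a b c : R) : Prop :=
  ∃ x y z : R, ¬(x = 0 ∧ y = 0 ∧ z = 0) ∧ a * x ^ n + b * y ^ n = c * z ^ n

/-- `u` and `v` have the same class modulo `n`-th powers. The relation is oriented (`v` is `u` times
an `n`-th power), which makes no difference between units. -/
def SamePowClass {R : Type*} [Monoid R] (n : ℕ) (u v : R) : Prop :=
  ∃ t : R, u * t ^ n = v

namespace SamePowClass

theorem map {R S F : Type*} [Monoid R] [Monoid S] [FunLike F R S] [MonoidHomClass F R S] (f : F)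
    {n : ℕ} {u v : R} (h : SamePowClass n u v) : SamePowClass n (f u) (f v) := by
  obtain ⟨t, rfl⟩ := h
  exact ⟨f t, by rw [map_mul, map_pow]⟩

theorem diagonalSoluble_left {R : Type*} [Ring R] [Nontrivial R] {n : ℕ} (hn : Odd n) {a b : R}
    (c : R) (h : SamePowClass n a b) : DiagonalSoluble n a b c := by
  obtain ⟨t, rfl⟩ := h
  exact ⟨t, -1, 0, by simp, by simp [hn.neg_one_pow, hn.pos.ne']⟩

theorem diagonalSoluble_outer {R : Type*} [Semiring R] [Nontrivial R] {n : ℕ} (hn : n ≠ 0)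
    {a c : R} (b : R) (h : SamePowClass n a c) : DiagonalSoluble n a b c := by
  obtain ⟨t, rfl⟩ := h
  exact ⟨t, 0, 1, by simp, by simp [hn]⟩

theorem diagonalSoluble_right {R : Type*} [Semiring R] [Nontrivial R] {n : ℕ} (hn : n ≠ 0) (a : R)
    {b c : R} (h : SamePowClass n b c) : DiagonalSoluble n a b c := by
  obtain ⟨t, rfl⟩ := h
  exact ⟨0, t, 1, by simp, by simp [hn]⟩

end SamePowClass

section Padic

open PadicInt

variable {p : ℕ} [hp : Fact p.Prime]

theorem exists_eq_mul_coe_padicInt {ι : Type*} [Finite ι] {x : ι → ℚ_[p]} (hx : x ≠ 0) :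
    ∃ r : ℚ_[p], r ≠ 0 ∧ ∃ y : ι → ℤ_[p], (∀ i, x i = r * y i) ∧ ∃ i, y i = 1 := by
  obtain ⟨j, hj⟩ := Function.ne_iff.mp hx
  have : Nonempty ι := ⟨j⟩
  obtain ⟨m, hm⟩ := Finite.exists_max fun i => ‖x i‖
  have hxm : x m ≠ 0 := norm_pos_iff.mp ((norm_pos_iff.mpr hj).trans_le (hm j))
  have integral : ∀ i, ‖x i / x m‖ ≤ 1 := fun i => by
    rw [norm_div]
    exact div_le_one_of_le₀ (hm i) (norm_nonneg _)
  exact ⟨x m, hxm, fun i => ⟨x i / x m, integral i⟩, fun i => (mul_div_cancel₀ _ hxm).symm,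
    m, Subtype.ext (div_self hxm)⟩

theorem diagonalSoluble_padic_iff_exists_isUnit {n : ℕ} {a b c : ℤ_[p]} :
    DiagonalSoluble n (a : ℚ_[p]) b c ↔
      ∃ x y z : ℤ_[p], (IsUnit x ∨ IsUnit y ∨ IsUnit z) ∧ a * x ^ n + b * y ^ n = c * z ^ n := by
  constructor
  · rintro ⟨x, y, z, hne, h⟩
    have hv : ![x, y, z] ≠ 0 := fun h0 =>
      hne ⟨congrFun h0 0, congrFun h0 1, congrFun h0 2⟩
    obtain ⟨r, hr, w, hw, i, hi⟩ := exists_eq_mul_coe_padicInt hv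
    obtain rfl : x = r * w 0 := hw 0
    obtain rfl : y = r * w 1 := hw 1
    obtain rfl : z = r * w 2 := hw 2
    refine ⟨w 0, w 1, w 2, ?_, ?_⟩
    · have hu : IsUnit (w i) := hi ▸ isUnit_one
      fin_cases i
      exacts [.inl hu, .inr (.inl hu), .inr (.inr hu)]
    · apply PadicInt.ext
      push_cast
      apply mul_left_cancel₀ (pow_ne_zero n hr)
      linear_combination h
  · rintro ⟨x, y, z, hu, h⟩
    refine ⟨x, y, z, ?_, by simpa using congrArg ((↑) : ℤ_[p] → ℚ_[p]) h⟩
    simp only [PadicInt.coe_eq_zero]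
    rintro ⟨rfl, rfl, rfl⟩
    simp at hu

theorem isUnit_iff_not_p_dvd {x : ℤ_[p]} : IsUnit x ↔ ¬(p : ℤ_[p]) ∣ x := by
  rw [← norm_lt_one_iff_dvd, ← not_isUnit_iff, not_not]

theorem exists_pow_prime_eq_of_sq_dvd_sub_one (hp2 : p ≠ 2) {u : ℤ_[p]}
    (hu : (p : ℤ_[p]) ^ 2 ∣ u - 1) : ∃ t, t ^ p = u := by
  obtain ⟨s, hs⟩ := hu
  have hp3 : 3 ≤ p := by have := hp.out.two_le; omega
  have hdvd : (p : ℤ_[p]) * p * p ∣ (p : ℤ_[p]) ^ p := by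
    simpa only [pow_succ, pow_zero, one_mul] using pow_dvd_pow (p : ℤ_[p]) hp3
  obtain ⟨y, hy⟩ := ZMod.exists_one_add_mul_pow_prime_eq hp.out (dvd_refl (p : ℤ_[p])) hdvd s
  set a : ℤ_[p] := 1 + p * s
  have ha : ‖a‖ = 1 := isUnit_iff.mp <| isUnit_iff_not_p_dvd.mpr fun h =>
    prime_p.not_dvd_one ((dvd_add_left (dvd_mul_right _ s)).mp h)
  set F : Polynomial ℤ_[p] := .X ^ p - .C u
  have hF : F.aeval a = p ^ 3 * y := by
    simp only [F, map_sub, map_pow, Polynomial.aeval_X, Polynomial.aeval_C, Algebra.algebraMap_self,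
      RingHom.id_apply]
    linear_combination hy - hs
  have hF' : F.derivative.aeval a = p * a ^ (p - 1) := by
    simp [F, Polynomial.derivative_X_pow]
  have hnorm : ‖F.aeval a‖ < ‖F.derivative.aeval a‖ ^ 2 := by
    rw [hF, hF', norm_mul, norm_mul, norm_pow, norm_pow, ha, one_pow, mul_one, PadicInt.norm_p]
    have hp0 : (0 : ℝ) < (p : ℝ)⁻¹ := by simp [hp.out.pos]
    have hp1 : (p : ℝ)⁻¹ < 1 := inv_lt_one_of_one_lt₀ (mod_cast hp.out.one_lt)
    calc (p : ℝ)⁻¹ ^ 3 * ‖y‖ ≤ (p : ℝ)⁻¹ ^ 3 := mul_le_of_le_one_right (by positivity) y.norm_le_one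
      _ < (p : ℝ)⁻¹ ^ 2 := pow_lt_pow_right_of_lt_one₀ hp0 hp1 (by norm_num)
  obtain ⟨t, ht, -⟩ := hensels_lemma hnorm
  exact ⟨t, sub_eq_zero.mp (by simpa [F] using ht)⟩

theorem toZModPow_eq_iff_dvd_sub {n : ℕ} {x y : ℤ_[p]} :
    toZModPow n x = toZModPow n y ↔ (p : ℤ_[p]) ^ n ∣ x - y := by
  rw [← Ideal.mem_span_singleton, ← ker_toZModPow, RingHom.mem_ker, map_sub, sub_eq_zero]

theorem samePowClass_prime_of_toZModPow_eq (hp2 : p ≠ 2) {b c : ℤ_[p]} (hb : IsUnit b)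
    (h : toZModPow 2 b = toZModPow 2 c) : SamePowClass p b c := by
  obtain ⟨u, rfl⟩ := hb
  have hdvd : (p : ℤ_[p]) ^ 2 ∣ ↑u⁻¹ * c - 1 := by
    rw [← toZModPow_eq_iff_dvd_sub, map_mul, ← h, ← map_mul, u.inv_mul]
  obtain ⟨t, ht⟩ := exists_pow_prime_eq_of_sq_dvd_sub_one hp2 hdvd
  exact ⟨t, by rw [ht, u.mul_inv_cancel_left]⟩

theorem zmod_pow_prime_pow_pred_eq_one {t : ZMod (p ^ 2)} (ht : IsUnit t) :
    (t ^ p) ^ (p - 1) = 1 := by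
  obtain ⟨u, rfl⟩ := ht
  have totient_sq : Nat.totient (p ^ 2) = p * (p - 1) := by
    simpa only [pow_one] using Nat.totient_prime_pow_succ hp.out 1
  rw [← pow_mul, ← totient_sq, ← Units.val_pow_eq_pow_val, ZMod.pow_totient, Units.val_one]

theorem zmod_pow_pred_eq_of_mul_pow_prime_eq {b c y z : ZMod (p ^ 2)} (hb : IsUnit b)
    (hc : IsUnit c) (hu : IsUnit y ∨ IsUnit z) (h : b * y ^ p = c * z ^ p) :
    b ^ (p - 1) = c ^ (p - 1) := by
  have hyz : IsUnit y ↔ IsUnit z := by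
    simpa only [IsUnit.mul_iff, hb, hc, true_and, isUnit_pow_iff hp.out.ne_zero] using
      iff_of_eq (congrArg IsUnit h)
  have hy : IsUnit y := hu.elim id hyz.mpr
  simpa only [mul_pow, zmod_pow_prime_pow_pred_eq_one hy,
    zmod_pow_prime_pow_pred_eq_one (hyz.mp hy), mul_one] using congrArg (· ^ (p - 1)) h

theorem samePowClass_prime_iff (hp2 : p ≠ 2) {b c : ℤ_[p]} (hb : IsUnit b) (hc : IsUnit c) :
    SamePowClass p b c ↔ toZModPow 2 b ^ (p - 1) = toZModPow 2 c ^ (p - 1) := by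
  constructor
  · rintro ⟨t, rfl⟩
    have ht : IsUnit t := isUnit_of_dvd_unit
      ((dvd_pow_self t hp.out.ne_zero).trans (dvd_mul_left _ b)) hc
    rw [map_mul, map_pow, mul_pow, zmod_pow_prime_pow_pred_eq_one (ht.map _), mul_one]
  · intro h
    rw [← map_pow, ← map_pow] at h
    obtain ⟨t, ht⟩ := samePowClass_prime_of_toZModPow_eq hp2 (hc.pow (p - 1)) h.symm
    obtain ⟨v, rfl⟩ := hb
    refine ⟨↑v⁻¹ * (c * t), (v.isUnit.pow (p - 1)).mul_left_cancel ?_⟩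
    calc (v : ℤ_[p]) ^ (p - 1) * (v * (↑v⁻¹ * (c * t)) ^ p)
        = (v * (↑v⁻¹ * (c * t))) ^ p := by
          rw [← mul_assoc, pow_sub_one_mul hp.out.ne_zero, mul_pow (v : ℤ_[p])]
      _ = c ^ (p - 1) * t ^ p * c := by
          rw [v.mul_inv_cancel_left, mul_pow, ← pow_sub_one_mul hp.out.ne_zero c, mul_right_comm]
      _ = v ^ (p - 1) * c := by rw [ht]

theorem p_dvd_pow_sub_self (x : ℤ_[p]) : (p : ℤ_[p]) ∣ x ^ p - x := by
  rw [← Ideal.mem_span_singleton, ← maximalIdeal_eq_span_p, ← ker_toZMod, RingHom.mem_ker, map_sub,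
    map_pow, ZMod.pow_card, sub_self]

theorem diagonalSoluble_p_mul (hp2 : p ≠ 2) {a b c : ℤ_[p]} (ha : IsUnit a) (hb : IsUnit b)
    (hc : IsUnit c) : DiagonalSoluble p ((p * a : ℤ_[p]) : ℚ_[p]) b c := by
  obtain ⟨y, hby⟩ := hb.dvd (a := c)
  obtain ⟨s, hs⟩ := p_dvd_pow_sub_self y
  obtain ⟨x, hax⟩ := ha.dvd (a := -(b * s))
  obtain ⟨r, hr⟩ := p_dvd_pow_sub_self x
  have hmod : toZModPow 2 c = toZModPow 2 ((p : ℤ_[p]) * a * x ^ p + b * y ^ p) := by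
    rw [eq_comm, toZModPow_eq_iff_dvd_sub]
    exact ⟨a * r, by linear_combination p * a * hr + b * hs - p * hax - hby⟩
  obtain ⟨z, hz⟩ := samePowClass_prime_of_toZModPow_eq hp2 hc hmod
  have hy : IsUnit y := isUnit_of_dvd_unit ⟨b, by rw [hby, mul_comm]⟩ hc
  exact diagonalSoluble_padic_iff_exists_isUnit.mpr ⟨x, y, z, .inr (.inl hy), hz.symm⟩

theorem isUnit_of_p_pow_mul_add_eq {k n : ℕ} (hk : k ≠ 0) (hkn : k < n) {a b c x y z : ℤ_[p]}
    (ha : IsUnit a) (hc : IsUnit c) (hu : IsUnit x ∨ IsUnit y ∨ IsUnit z)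
    (h : p ^ k * a * x ^ n + b * y ^ n = c * z ^ n) : IsUnit y := by
  by_contra hy
  have hpy : (p : ℤ_[p]) ∣ y := by simpa only [isUnit_iff_not_p_dvd, not_not] using hy
  have hpz : (p : ℤ_[p]) ∣ z := by
    refine prime_p.dvd_of_dvd_pow (n := n) (hc.dvd_mul_left.mp ?_)
    rw [← h, mul_assoc]
    exact dvd_add ((dvd_pow_self _ hk).mul_right _) ((hpy.pow (by omega)).mul_left b)
  have hpow : (p : ℤ_[p]) ^ k * p ∣ p ^ k * (a * x ^ n) := by
    rw [← pow_succ, ← mul_assoc, eq_sub_of_add_eq h]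
    exact (pow_dvd_pow _ hkn).trans <| dvd_sub
      ((pow_dvd_pow_of_dvd hpz n).mul_left c) ((pow_dvd_pow_of_dvd hpy n).mul_left b)
  have hpx : (p : ℤ_[p]) ∣ x := prime_p.dvd_of_dvd_pow <| ha.dvd_mul_left.mp <|
    (mul_dvd_mul_iff_left (pow_ne_zero k prime_p.ne_zero)).mp hpow
  simp only [isUnit_iff_not_p_dvd] at hu
  tauto

theorem diagonalSoluble_p_pow_mul_iff (hp2 : p ≠ 2) {k : ℕ} (hk : 2 ≤ k) (hkp : k < p)
    {a b c : ℤ_[p]} (ha : IsUnit a) (hb : IsUnit b) (hc : IsUnit c) :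
    DiagonalSoluble p ((p ^ k * a : ℤ_[p]) : ℚ_[p]) b c ↔ SamePowClass p b c := by
  refine ⟨fun h => ?_, fun h => (h.map Coe.ringHom).diagonalSoluble_right hp.out.ne_zero _⟩
  obtain ⟨x, y, z, hu, h⟩ := diagonalSoluble_padic_iff_exists_isUnit.mp h
  have hy : IsUnit y := isUnit_of_p_pow_mul_add_eq (by omega) hkp ha hc hu h
  have hmod : toZModPow 2 (b * y ^ p) = toZModPow 2 (c * z ^ p) := by
    rw [eq_comm, toZModPow_eq_iff_dvd_sub, ← h, add_sub_cancel_right, mul_assoc]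
    exact (pow_dvd_pow _ hk).mul_right _
  simp only [map_mul, map_pow] at hmod
  exact (samePowClass_prime_iff hp2 hb hc).mpr <|
    zmod_pow_pred_eq_of_mul_pow_prime_eq (hb.map _) (hc.map _) (.inl (hy.map _)) hmod

end Padic

section ThreeAdic

open PadicInt

theorem zmod_nine_sq_eq_sq_of_isUnit_add {a b c : ZMod 9} (ha : IsUnit a) (hb : IsUnit b)
    (hc : IsUnit c) (h : a + b = c) : a ^ 2 = b ^ 2 ∨ a ^ 2 = c ^ 2 ∨ b ^ 2 = c ^ 2 := by
  revert a b c
  decide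

theorem zmod_nine_sq_eq_sq_of_cubic_eq {a b c x y z : ZMod (3 ^ 2)} (ha : IsUnit a)
    (hb : IsUnit b) (hc : IsUnit c) (hu : IsUnit x ∨ IsUnit y ∨ IsUnit z)
    (h : a * x ^ 3 + b * y ^ 3 = c * z ^ 3) : a ^ 2 = b ^ 2 ∨ a ^ 2 = c ^ 2 ∨ b ^ 2 = c ^ 2 := by
  have cube_eq_zero : ∀ t : ZMod (3 ^ 2), ¬IsUnit t → t ^ 3 = 0 := by decide
  by_cases hx : IsUnit x
  swap
  · rw [cube_eq_zero x hx, mul_zero, zero_add] at h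
    exact .inr (.inr (zmod_pow_pred_eq_of_mul_pow_prime_eq hb hc (hu.resolve_left hx) h))
  by_cases hy : IsUnit y
  swap
  · rw [cube_eq_zero y hy, mul_zero, add_zero] at h
    exact .inr (.inl (zmod_pow_pred_eq_of_mul_pow_prime_eq ha hc (.inl hx) h))
  by_cases hz : IsUnit z
  swap
  · rw [cube_eq_zero z hz, mul_zero, add_eq_zero_iff_eq_neg, ← neg_mul] at h
    have hab := zmod_pow_pred_eq_of_mul_pow_prime_eq ha hb.neg (.inl hx) h
    exact .inl (by rwa [neg_sq] at hab)
  have sq_term : ∀ {d t : ZMod (3 ^ 2)}, IsUnit t → (d * t ^ 3) ^ 2 = d ^ 2 := fun ht => by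
    rw [mul_pow, zmod_pow_prime_pow_pred_eq_one ht, mul_one]
  simpa only [sq_term hx, sq_term hy, sq_term hz] using
    zmod_nine_sq_eq_sq_of_isUnit_add (ha.mul (hx.pow 3)) (hb.mul (hy.pow 3)) (hc.mul (hz.pow 3)) h

theorem diagonalSoluble_cubic_units_iff {a b c : ℤ_[3]} (ha : IsUnit a) (hb : IsUnit b)
    (hc : IsUnit c) : DiagonalSoluble 3 (a : ℚ_[3]) b c ↔
      SamePowClass 3 a b ∨ SamePowClass 3 a c ∨ SamePowClass 3 b c := by
  constructor
  · intro h
    obtain ⟨x, y, z, hu, h⟩ := diagonalSoluble_padic_iff_exists_isUnit.mp h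
    have hmod := congrArg (toZModPow 2) h
    simp only [map_add, map_mul, map_pow] at hmod
    rw [samePowClass_prime_iff (by decide) ha hb, samePowClass_prime_iff (by decide) ha hc,
      samePowClass_prime_iff (by decide) hb hc]
    exact zmod_nine_sq_eq_sq_of_cubic_eq (ha.map _) (hb.map _) (hc.map _)
      (hu.imp (.map _) (.imp (.map _) (.map _))) hmod
  · rintro (h | h | h)
    · exact (h.map Coe.ringHom).diagonalSoluble_left (by decide) _
    · exact (h.map Coe.ringHom).diagonalSoluble_outer (by decide) _
    · exact (h.map Coe.ringHom).diagonalSoluble_right (by decide) _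

theorem isUnit_two_pow_padicInt_three (i : ℕ) : IsUnit (2 ^ i : ℤ_[3]) := by
  refine .pow i (isUnit_iff.mpr ?_)
  exact mod_cast norm_natCast_eq_one_iff.mpr (by decide : Nat.Coprime 3 2)

theorem samePowClass_three_two_pow_iff {i j : ℕ} (hi : i ≤ 2) (hj : j ≤ 2) :
    SamePowClass 3 (2 ^ i : ℤ_[3]) (2 ^ j) ↔ i = j := by
  have four_pow_eq_iff : ∀ i ≤ 2, ∀ j ≤ 2, (2 ^ i : ZMod (3 ^ 2)) ^ 2 = (2 ^ j) ^ 2 ↔ i = j := by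
    decide
  rw [samePowClass_prime_iff (by decide) (isUnit_two_pow_padicInt_three i)
    (isUnit_two_pow_padicInt_three j)]
  simpa only [map_pow, map_ofNat] using four_pow_eq_iff i hi j hj

theorem pair_ne_one_two_iff {i j : ℕ} (hi : i ≤ 2) (hj : j ≤ 2) :
    ({i, j} : Set ℕ) ≠ {1, 2} ↔ 0 = i ∨ 0 = j ∨ i = j := by
  rw [Ne, Set.pair_eq_pair_iff]
  omega

theorem stmt13_general {k : ℕ} (hk : k ≤ 2) {a b c : ℤ_[3]} (ha : IsUnit a) (hb : IsUnit b)
    (hc : IsUnit c) : DiagonalSoluble 3 ((3 ^ k * a : ℤ_[3]) : ℚ_[3]) b c ↔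
      (k = 0 ∧ (SamePowClass 3 a b ∨ SamePowClass 3 a c ∨ SamePowClass 3 b c)) ∨
        k = 1 ∨ (k = 2 ∧ SamePowClass 3 b c) := by
  interval_cases k
  · simpa using diagonalSoluble_cubic_units_iff ha hb hc
  · simpa using diagonalSoluble_p_mul (by decide) ha hb hc
  · simpa using diagonalSoluble_p_pow_mul_iff (by decide) le_rfl (by decide) ha hb hc

end ThreeAdic

/-- for `i, j, k ∈ {0, 1, 2}`, the equation `3^k x³ + 2^i y³ = 2^j z³`
has a nontrivial `ℚ₃`-solution iff (`k = 0` and `{i,j} ≠ {1,2}`), or `k = 1`, or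
(`k = 2` and `i = j`). -/
theorem stmt13 (i j k : ℕ) (hi : i ≤ 2) (hj : j ≤ 2) (hk : k ≤ 2) :
    (∃ x y z : ℚ_[3], ¬(x = 0 ∧ y = 0 ∧ z = 0) ∧
        (3 : ℚ_[3]) ^ k * x ^ 3 + (2 : ℚ_[3]) ^ i * y ^ 3 = (2 : ℚ_[3]) ^ j * z ^ 3)
      ↔ (k = 0 ∧ ({i, j} : Set ℕ) ≠ {1, 2}) ∨ k = 1 ∨ (k = 2 ∧ i = j) := by
  rw [pair_ne_one_two_iff hi hj, ← samePowClass_three_two_pow_iff (Nat.zero_le 2) hi,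
    ← samePowClass_three_two_pow_iff (Nat.zero_le 2) hj, ← samePowClass_three_two_pow_iff hi hj]
  have h := stmt13_general hk (isUnit_two_pow_padicInt_three 0) (isUnit_two_pow_padicInt_three i)
    (isUnit_two_pow_padicInt_three j)
  push_cast [pow_zero, mul_one] at h ⊢
  exact h
end

section
/- Let p₁, p₂, p₃ be rational primes each congruent to 2 or 5 modulo 9. Then for every rational prime p, the equation x₁³ + p₁p₂x₂³ + p₂p₃x₃³ + p₃p₁x₄³ = 0 has a solution (x₁,x₂,x₃,x₄) ∈ ℚ_p⁴ ∖ {(0,0,0,0)}. -/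
/-!
If the group `Rˣ ⧸ Rˣ³` of cube classes is cyclic, then its order divides `3`, and two of the
classes of `1`, `ab`, `bc`, `ca` coincide, whatever the units `a`, `b`, `c` are. The equation
`x₁³ + ab x₂³ + bc x₃³ + ca x₄³ = 0` then has a solution with only two nonzero coordinates, because
`-1` is a cube. Over `ℚ_p` with `p ≡ 2 (mod 3)` every unit of `ℤ_p` is a cube, so the cube class of
a number is determined by its valuation. For odd `p` the cube classes of units of `ℤ_p` form a
cyclic group, because a unit close enough to `1` is a cube and `(ℤ/p^m)ˣ` is cyclic.
-/

section CyclicQuotient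

lemma isCyclic_quotient_of_ker_le {G H : Type*} [Group G] [Group H] [IsCyclic H] (f : G →* H)
    {N : Subgroup G} [N.Normal] (h : f.ker ≤ N) : IsCyclic (G ⧸ N) := by
  have : IsCyclic (G ⧸ f.ker) :=
    isCyclic_of_surjective _ (QuotientGroup.quotientKerEquivRange f).symm.surjective
  refine isCyclic_of_surjective (QuotientGroup.map f.ker N (.id G) h) fun y ↦ ?_
  obtain ⟨x, rfl⟩ := QuotientGroup.mk_surjective y
  exact ⟨x, rfl⟩

lemma mul_eq_one_or_eq_of_pow_three_eq_one {Q : Type*} [CommGroup Q] [IsCyclic Q]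
    (hQ : ∀ x : Q, x ^ 3 = 1) (a b c : Q) :
    a * b = 1 ∨ b * c = 1 ∨ c * a = 1 ∨ a = b ∨ b = c ∨ c = a := by
  obtain ⟨g, hg⟩ := exists_zpow_surjective Q
  have zpow_eq_one {k : ℤ} (hk : 3 ∣ k) : g ^ k = 1 := by
    obtain ⟨m, rfl⟩ := hk
    rw [mul_comm, zpow_mul]
    exact_mod_cast hQ (g ^ m)
  have zpow_eq_zpow {k l : ℤ} (hkl : 3 ∣ k - l) : g ^ k = g ^ l := by
    rw [← div_eq_one, div_eq_mul_inv, ← zpow_sub, zpow_eq_one hkl]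
  obtain ⟨α, rfl⟩ := hg a
  obtain ⟨β, rfl⟩ := hg b
  obtain ⟨γ, rfl⟩ := hg c
  have exponents : 3 ∣ α + β ∨ 3 ∣ β + γ ∨ 3 ∣ γ + α ∨ 3 ∣ α - β ∨ 3 ∣ β - γ ∨ 3 ∣ γ - α := by
    have residues (k : ℤ) : k % 3 = 0 ∨ k % 3 = 1 ∨ k % 3 = 2 := by omega
    have := residues α
    have := residues β
    have := residues γ
    omega
  simp only [← zpow_add]
  exact exponents.imp zpow_eq_one <| .imp zpow_eq_one <| .imp zpow_eq_one <|
    .imp zpow_eq_zpow <| .imp zpow_eq_zpow zpow_eq_zpow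

end CyclicQuotient

section CubicSurface

/-- The cubic surface `x₁³ + ab x₂³ + bc x₃³ + ca x₄³ = 0` has an `R`-point, i.e. a solution in `R⁴`
other than the origin. -/
def HasCubicPoint {R : Type*} [CommRing R] (a b c : R) : Prop :=
  ∃ x₁ x₂ x₃ x₄ : R, ¬(x₁ = 0 ∧ x₂ = 0 ∧ x₃ = 0 ∧ x₄ = 0) ∧
    x₁ ^ 3 + a * b * x₂ ^ 3 + b * c * x₃ ^ 3 + c * a * x₄ ^ 3 = 0

variable {R : Type*} [CommRing R]

lemma HasCubicPoint.map {S : Type*} [CommRing S] {a b c : R} (h : HasCubicPoint a b c)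
    {f : R →+* S} (hf : Function.Injective f) : HasCubicPoint (f a) (f b) (f c) := by
  obtain ⟨x₁, x₂, x₃, x₄, hne, heq⟩ := h
  refine ⟨f x₁, f x₂, f x₃, f x₄, ?_, ?_⟩
  · simpa only [map_eq_zero_iff f hf] using hne
  · simpa only [map_add, map_mul, map_pow, map_zero] using congrArg f heq

variable [Nontrivial R]

lemma hasCubicPoint_of_mul_eq_zero [NoZeroDivisors R] {a b c : R} (h : a * b * c = 0) :
    HasCubicPoint a b c := by
  obtain (rfl | rfl) | rfl : (a = 0 ∨ b = 0) ∨ c = 0 := by simpa only [mul_eq_zero] using h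
  · exact ⟨0, 1, 0, 0, by simp, by ring⟩
  · exact ⟨0, 1, 0, 0, by simp, by ring⟩
  · exact ⟨0, 0, 1, 0, by simp, by ring⟩

lemma hasCubicPoint_of_isCyclic [IsCyclic (Rˣ ⧸ (powMonoidHom 3 : Rˣ →* Rˣ).range)]
    (a b c : Rˣ) : HasCubicPoint (a : R) b c := by
  have exists_cube {u : Rˣ} (h : (u : Rˣ ⧸ (powMonoidHom 3 : Rˣ →* Rˣ).range) = 1) :
      ∃ t : R, t ^ 3 = u := by
    obtain ⟨t, rfl⟩ := (QuotientGroup.eq_one_iff u).1 h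
    exact ⟨t, by simp⟩
  have exists_ratio {u v : Rˣ} (h : (u : Rˣ ⧸ (powMonoidHom 3 : Rˣ →* Rˣ).range) = v) :
      ∃ t : R, u * t ^ 3 = v := by
    obtain ⟨t, ht⟩ := QuotientGroup.eq.1 h
    exact ⟨t, by exact_mod_cast congrArg Units.val (eq_inv_mul_iff_mul_eq.1 ht)⟩
  have pow_three_eq_one : ∀ x : Rˣ ⧸ (powMonoidHom 3 : Rˣ →* Rˣ).range, x ^ 3 = 1 := by
    rintro ⟨x⟩
    exact (QuotientGroup.eq_one_iff _).2 ⟨x, rfl⟩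
  obtain h | h | h | h | h | h := mul_eq_one_or_eq_of_pow_three_eq_one pow_three_eq_one
    (a : Rˣ ⧸ (powMonoidHom 3 : Rˣ →* Rˣ).range) b c
  · obtain ⟨t, ht⟩ := exists_cube (u := a * b) h
    exact ⟨-t, 1, 0, 0, by simp, by push_cast at ht; linear_combination -ht⟩
  · obtain ⟨t, ht⟩ := exists_cube (u := b * c) h
    exact ⟨-t, 0, 1, 0, by simp, by push_cast at ht; linear_combination -ht⟩
  · obtain ⟨t, ht⟩ := exists_cube (u := c * a) h
    exact ⟨-t, 0, 0, 1, by simp, by push_cast at ht; linear_combination -ht⟩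
  · obtain ⟨t, ht⟩ := exists_ratio h
    exact ⟨0, 0, 1, -t, by simp, by linear_combination -c * ht⟩
  · obtain ⟨t, ht⟩ := exists_ratio h
    exact ⟨0, -t, 0, 1, by simp, by linear_combination -a * ht⟩
  · obtain ⟨t, ht⟩ := exists_ratio h
    exact ⟨0, 1, -t, 0, by simp, by linear_combination -b * ht⟩

end CubicSurface

section PadicPowers

variable {p : ℕ} [Fact p.Prime]

open Polynomial in
lemma exists_pow_eq_of_norm_pow_sub_lt {n : ℕ} {u y : ℤ_[p]ˣ}
    (h : ‖(y : ℤ_[p]) ^ n - u‖ < ‖(n : ℤ_[p])‖ ^ 2) : ∃ z : ℤ_[p]ˣ, z ^ n = u := by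
  have norm_deriv : ‖(derivative (X ^ n - C (u : ℤ_[p]))).aeval (y : ℤ_[p])‖ = ‖(n : ℤ_[p])‖ := by
    simp [derivative_X_pow]
  obtain ⟨z, hz, -⟩ := hensels_lemma (F := X ^ n - C (u : ℤ_[p])) (a := (y : ℤ_[p]))
    (by rw [norm_deriv]; simpa using h)
  have hzu : z ^ n = u := by simpa [sub_eq_zero] using hz
  have hn : n ≠ 0 := by
    rintro rfl
    exact (norm_nonneg _).not_gt (by simpa using h)
  have hz_unit : IsUnit z := (isUnit_pow_iff hn).1 (hzu ▸ u.isUnit)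
  exact ⟨hz_unit.unit, Units.ext hzu⟩

lemma toZModPow_eq_iff_norm_sub_le {m : ℕ} {x y : ℤ_[p]} :
    PadicInt.toZModPow m x = PadicInt.toZModPow m y ↔ ‖x - y‖ ≤ (p : ℝ) ^ (-m : ℤ) := by
  rw [PadicInt.norm_le_pow_iff_mem_span_pow, ← PadicInt.ker_toZModPow, RingHom.mem_ker, map_sub,
    sub_eq_zero]

lemma isCyclic_padicInt_units_quotient_pow (hp : p ≠ 2) {n : ℕ} (hn : n ≠ 0) :
    IsCyclic (ℤ_[p]ˣ ⧸ (powMonoidHom n : ℤ_[p]ˣ →* ℤ_[p]ˣ).range) := by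
  obtain ⟨m, hm⟩ : ∃ m : ℕ, (p : ℝ) ^ (-m : ℤ) < ‖(n : ℤ_[p])‖ ^ 2 :=
    PadicInt.exists_pow_neg_lt p (pow_pos (norm_pos_iff.2 (Nat.cast_ne_zero.2 hn)) 2)
  have := ZMod.isCyclic_units_of_prime_pow p Fact.out hp m
  refine isCyclic_quotient_of_ker_le (Units.map (PadicInt.toZModPow (p := p) m).toMonoidHom)
    fun u hu ↦ ?_
  have hu_one : PadicInt.toZModPow m (1 : ℤ_[p]) = PadicInt.toZModPow m (u : ℤ_[p]) := by
    simpa using (congrArg Units.val hu).symm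
  apply exists_pow_eq_of_norm_pow_sub_lt (y := 1)
  simpa using (toZModPow_eq_iff_norm_sub_le.1 hu_one).trans_lt hm

lemma exists_pow_eq_of_coprime {n : ℕ} (hp : p.Coprime n) (hp' : (p - 1).Coprime n)
    (u : ℤ_[p]ˣ) : ∃ z : ℤ_[p]ˣ, z ^ n = u := by
  have hcard : (Nat.card (ZMod p)ˣ).Coprime n := by
    rwa [Nat.card_eq_fintype_card, ZMod.card_units]
  let π : ℤ_[p]ˣ →* (ZMod p)ˣ := Units.map (PadicInt.toZMod (p := p)).toMonoidHom
  obtain ⟨k, hk⟩ : ∃ k : ℤ, (π u ^ k) ^ n = π u :=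
    ⟨_, (powCoprime hcard).apply_symm_apply (π u)⟩
  have hπ : π ((u ^ k) ^ n) = π u := by rw [map_pow, map_zpow, hk]
  have hres : PadicInt.toZMod (((u ^ k : ℤ_[p]ˣ) : ℤ_[p]) ^ n) = PadicInt.toZMod (u : ℤ_[p]) :=
    congrArg Units.val hπ
  have hlt : ‖((u ^ k : ℤ_[p]ˣ) : ℤ_[p]) ^ n - (u : ℤ_[p])‖ < 1 := by
    rw [← PadicInt.mem_nonunits, ← IsLocalRing.mem_maximalIdeal, ← PadicInt.ker_toZMod,
      RingHom.mem_ker, map_sub, hres, sub_self]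
  have hn : ‖(n : ℤ_[p])‖ = 1 := PadicInt.norm_natCast_eq_one_iff.2 hp
  exact exists_pow_eq_of_norm_pow_sub_lt (y := u ^ k) (by rwa [hn, one_pow])

lemma isCyclic_padic_units_quotient_pow {n : ℕ} (hp : p.Coprime n) (hp' : (p - 1).Coprime n) :
    IsCyclic (ℚ_[p]ˣ ⧸ (powMonoidHom n : ℚ_[p]ˣ →* ℚ_[p]ˣ).range) := by
  have : IsCyclic (WithZero (Multiplicative ℤ))ˣ :=
    isCyclic_of_surjective _ (WithZero.unitsWithZeroEquiv (α := Multiplicative ℤ)).symm.surjective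
  refine isCyclic_quotient_of_ker_le
    (Units.map (Padic.mulValuation (p := p)).toMonoidWithZeroHom.toMonoidHom) fun x hx ↦ ?_
  have hval : Padic.mulValuation (x : ℚ_[p]) = 1 := congrArg Units.val hx
  have hnorm : ‖(x : ℚ_[p])‖ = 1 := by
    simp [Padic.norm_eq_zpow_log_mulValuation x.ne_zero, hval]
  obtain ⟨z, hz⟩ := exists_pow_eq_of_coprime hp hp' (PadicInt.mkUnits hnorm)
  refine ⟨Units.map PadicInt.Coe.ringHom.toMonoidHom z, Units.ext ?_⟩
  exact congrArg (PadicInt.Coe.ringHom ∘ Units.val) hz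

end PadicPowers

lemma mod_three_eq_two_of_dvd_natCast {p q : ℕ} [Fact p.Prime] (hq : q.Prime) (hq2 : q % 3 = 2)
    (h : (p : ℤ_[p]) ∣ q) : p % 3 = 2 := by
  have hpq : p ∣ q := PadicInt.norm_natCast_lt_one_iff.1 ((PadicInt.norm_lt_one_iff_dvd _).2 h)
  rwa [(Nat.prime_dvd_prime_iff_eq Fact.out hq).1 hpq]

lemma hasCubicPoint_padic_of_mod_three_eq_two {p : ℕ} [Fact p.Prime] (hp : p % 3 = 2)
    (a b c : ℚ_[p]) : HasCubicPoint a b c := by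
  obtain h₀ | h₀ := eq_or_ne (a * b * c) 0
  · exact hasCubicPoint_of_mul_eq_zero h₀
  obtain ⟨⟨ha, hb⟩, hc⟩ : (a ≠ 0 ∧ b ≠ 0) ∧ c ≠ 0 := by simpa only [mul_ne_zero_iff] using h₀
  have coprime_three {k : ℕ} (hk : ¬3 ∣ k) : k.Coprime 3 :=
    (Nat.prime_three.coprime_iff_not_dvd.2 hk).symm
  have := isCyclic_padic_units_quotient_pow (p := p)
    (coprime_three (by omega)) (coprime_three (by omega))
  exact hasCubicPoint_of_isCyclic (.mk0 a ha) (.mk0 b hb) (.mk0 c hc)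

theorem stmt14_general {p : ℕ} [Fact p.Prime] {a b c : ℤ_[p]} (ha : (p : ℤ_[p]) ∣ a → p % 3 = 2)
    (hb : (p : ℤ_[p]) ∣ b → p % 3 = 2) (hc : (p : ℤ_[p]) ∣ c → p % 3 = 2) :
    HasCubicPoint (a : ℚ_[p]) b c := by
  by_cases hp : p % 3 = 2
  · exact hasCubicPoint_padic_of_mod_three_eq_two hp a b c
  have isUnit_of_not_dvd {x : ℤ_[p]} (hx : ¬(p : ℤ_[p]) ∣ x) : IsUnit x := by
    by_contra h
    exact hx ((PadicInt.norm_lt_one_iff_dvd x).1 (PadicInt.not_isUnit_iff.1 h))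
  lift a to ℤ_[p]ˣ using isUnit_of_not_dvd (mt ha hp)
  lift b to ℤ_[p]ˣ using isUnit_of_not_dvd (mt hb hp)
  lift c to ℤ_[p]ˣ using isUnit_of_not_dvd (mt hc hp)
  have := isCyclic_padicInt_units_quotient_pow (p := p) (by omega) three_ne_zero
  exact (hasCubicPoint_of_isCyclic a b c).map (f := PadicInt.Coe.ringHom) Subtype.val_injective

/-- (Remark 0.2 i)): if `p₁, p₂, p₃` are rational primes each `≡ 2` or
`5 (mod 9)`, then for every rational prime `p` the surface
`x₁³ + p₁p₂ x₂³ + p₂p₃ x₃³ + p₃p₁ x₄³ = 0` has a nontrivial `ℚ_p`-point. -/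
theorem stmt14 (p₁ p₂ p₃ : ℕ) (hp₁ : p₁.Prime) (hp₂ : p₂.Prime) (hp₃ : p₃.Prime)
    (h₁ : p₁ % 9 = 2 ∨ p₁ % 9 = 5) (h₂ : p₂ % 9 = 2 ∨ p₂ % 9 = 5)
    (h₃ : p₃ % 9 = 2 ∨ p₃ % 9 = 5) :
    ∀ (p : ℕ) [Fact p.Prime],
      ∃ x₁ x₂ x₃ x₄ : ℚ_[p], ¬(x₁ = 0 ∧ x₂ = 0 ∧ x₃ = 0 ∧ x₄ = 0) ∧
        x₁ ^ 3 + ((p₁ * p₂ : ℕ) : ℚ_[p]) * x₂ ^ 3 + ((p₂ * p₃ : ℕ) : ℚ_[p]) * x₃ ^ 3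
          + ((p₃ * p₁ : ℕ) : ℚ_[p]) * x₄ ^ 3 = 0 := by
  intro p _
  have hpoint : HasCubicPoint (p₁ : ℚ_[p]) p₂ p₃ := stmt14_general
    (mod_three_eq_two_of_dvd_natCast hp₁ (by omega))
    (mod_three_eq_two_of_dvd_natCast hp₂ (by omega))
    (mod_three_eq_two_of_dvd_natCast hp₃ (by omega))
  simpa only [HasCubicPoint, Nat.cast_mul] using hpoint
end

section
/- Let K be a quadratic extension of ℚ (for instance K = ℚ(ζ₃)) and let a₁, a₂, a₃, a₄ be nonzero rational numbers. If the equation a₁x₁³ + a₂x₂³ + a₃x₃³ + a₄x₄³ = 0 has a solution (x₁,x₂,x₃,x₄) ∈ K⁴ ∖ {(0,0,0,0)}, then it has a solution in ℚ⁴ ∖ {(0,0,0,0)}. -/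
/-!
Pick `θ ∈ K` outside the base field and write a `K`-rational zero `x` of the cubic form `f` as
`q * θ + p` with `p`, `q` rational. The restriction of `f` to the rational line through `p` with
direction `q` is a polynomial with root `θ` whose coefficient of degree three is `f(q)`. If
`f(q) ≠ 0`, dividing by the quadratic minimal polynomial of `θ` leaves a linear factor, whose root
`r` gives the rational zero `q * r + p`; it is nontrivial, since otherwise `x = (θ - r) * q` and
`f(x) = (θ - r) ^ 3 * f(q) ≠ 0`. If `f(q) = 0`, either `q` itself is a nontrivial zero or `q = 0`
and `x = p` is already rational.
-/

open MvPolynomial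
open scoped Polynomial

section HomogeneousForms

variable {σ R A : Type*} [CommSemiring R] [CommSemiring A] [Algebra R A] {n : ℕ}
  {f : MvPolynomial σ R}

theorem aeval_const_mul_of_isHomogeneous (hf : f.IsHomogeneous n) (c : A) (x : σ → A) :
    aeval (fun i => c * x i) f = c ^ n * aeval x f := by
  simp only [aeval_def, eval₂_eq, Finset.mul_sum]
  refine Finset.sum_congr rfl fun d hd => ?_
  rw [hf.degree_eq_sum_deg_support hd, ← Finset.prod_pow_eq_pow_sum]
  simp only [mul_pow, Finset.prod_mul_distrib]
  ring

theorem coeff_prod_sum_of_natDegree_le {ι : Type*} (s : Finset ι) (g : ι → R[X]) (e : ι → ℕ)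
    (hg : ∀ i ∈ s, (g i).natDegree ≤ e i) :
    (∏ i ∈ s, g i).coeff (∑ i ∈ s, e i) = ∏ i ∈ s, (g i).coeff (e i) := by
  classical
  induction s using Finset.induction_on with
  | empty => simp
  | insert i s hi ih =>
    rw [Finset.forall_mem_insert] at hg
    have hprod : (∏ j ∈ s, g j).natDegree ≤ ∑ j ∈ s, e j :=
      (Polynomial.natDegree_prod_le s g).trans (Finset.sum_le_sum hg.2)
    rw [Finset.prod_insert hi, Finset.sum_insert hi, Finset.prod_insert hi,
      Polynomial.coeff_mul_add_eq_of_natDegree_le hg.1 hprod, ih hg.2]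

theorem coeff_aeval_of_natDegree_le_one (hf : f.IsHomogeneous n) {g : σ → R[X]}
    (hg : ∀ i, (g i).natDegree ≤ 1) :
    (aeval g f).coeff n = eval (fun i => (g i).coeff 1) f := by
  have hdeg (i : σ) (k : ℕ) : (g i ^ k).natDegree ≤ k := by
    simpa using Polynomial.natDegree_pow_le_of_le k (hg i)
  have hcoeff (i : σ) (k : ℕ) : (g i ^ k).coeff k = (g i).coeff 1 ^ k := by
    simpa using Polynomial.coeff_pow_of_natDegree_le (m := k) (hg i)
  rw [aeval_def, eval₂_eq, eval_eq, Polynomial.finsetSum_coeff]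
  refine Finset.sum_congr rfl fun d hd => ?_
  rw [Polynomial.algebraMap_eq, Polynomial.coeff_C_mul, hf.degree_eq_sum_deg_support hd,
    coeff_prod_sum_of_natDegree_le _ _ _ fun i _ => hdeg i (d i)]
  simp only [hcoeff]

/-- The restriction of `f` to the line through `p` with direction `q`, as a polynomial
in the parameter `t` of the point `q * t + p`. -/
noncomputable def lineRestriction (f : MvPolynomial σ R) (p q : σ → R) : R[X] :=
  aeval (fun i => Polynomial.C (q i) * Polynomial.X + Polynomial.C (p i)) f

theorem aeval_lineRestriction (f : MvPolynomial σ R) (p q : σ → R) (t : A) :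
    Polynomial.aeval t (lineRestriction f p q) =
      aeval (fun i => algebraMap R A (q i) * t + algebraMap R A (p i)) f := by
  rw [lineRestriction, ← AlgHom.restrictScalars_apply R, comp_aeval_apply]
  simp

theorem natDegree_lineRestriction (hf : f.IsHomogeneous n) (p : σ → R) {q : σ → R}
    (hq : eval q f ≠ 0) : (lineRestriction f p q).natDegree = n := by
  have hlin (i : σ) : (Polynomial.C (q i) * Polynomial.X + Polynomial.C (p i)).natDegree ≤ 1 :=
    Polynomial.natDegree_linear_le
  have hle : (lineRestriction f p q).natDegree ≤ n := by
    simpa only [mul_one] using! aeval_natDegree_le f hf.totalDegree_le _ hlin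
  have hcoeff : (lineRestriction f p q).coeff n = eval q f := by
    simpa using! coeff_aeval_of_natDegree_le_one hf hlin
  exact Polynomial.natDegree_eq_of_le_of_coeff_ne_zero hle (hcoeff ▸ hq)

/-- The diagonal form of degree `n` with coefficients `a`, used to read an equation in explicit
unknowns as the vanishing of a single homogeneous polynomial. -/
noncomputable def diagonalForm [Fintype σ] (n : ℕ) (a : σ → R) : MvPolynomial σ R :=
  ∑ i, C (a i) * X i ^ n

theorem isHomogeneous_diagonalForm [Fintype σ] (n : ℕ) (a : σ → R) :
    (diagonalForm n a).IsHomogeneous n :=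
  .sum _ _ _ fun i _ => isHomogeneous_C_mul_X_pow (a i) i n

theorem exists_aeval_diagonalForm_fin_four_eq_zero_iff (n : ℕ) (a₁ a₂ a₃ a₄ : R) :
    (∃ x : Fin 4 → A, x ≠ 0 ∧ aeval x (diagonalForm n ![a₁, a₂, a₃, a₄]) = 0) ↔
      ∃ x₁ x₂ x₃ x₄ : A, ¬(x₁ = 0 ∧ x₂ = 0 ∧ x₃ = 0 ∧ x₄ = 0) ∧
        algebraMap R A a₁ * x₁ ^ n + algebraMap R A a₂ * x₂ ^ n
          + algebraMap R A a₃ * x₃ ^ n + algebraMap R A a₄ * x₄ ^ n = 0 := by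
  rw [← FinVec.exists_iff]
  simp [FinVec.Exists, diagonalForm, Fin.sum_univ_four, Matrix.cons_eq_zero_iff]

end HomogeneousForms

section QuadraticExtensions

variable {F K : Type*} [Field F] [Field K] [Algebra F K]

theorem exists_isRoot_of_natDegree_eq_natDegree_minpoly_add_one {θ : K} {g : F[X]}
    (hg : g.natDegree = (minpoly F θ).natDegree + 1) (hθ : Polynomial.aeval θ g = 0) :
    ∃ r, g.IsRoot r := by
  obtain ⟨l, rfl⟩ := minpoly.dvd F θ hθ
  have hne : minpoly F θ * l ≠ 0 := by
    intro h
    simp [h] at hg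
  obtain ⟨hm, hl⟩ := mul_ne_zero_iff.mp hne
  have hdeg : l.degree = 1 := by
    rw [Polynomial.natDegree_mul hm hl, Nat.add_left_cancel_iff] at hg
    exact (Polynomial.degree_eq_iff_natDegree_eq hl).mpr hg
  obtain ⟨r, hr⟩ := Polynomial.exists_root_of_degree_eq_one hdeg
  exact ⟨r, Polynomial.root_mul_left_of_isRoot _ hr⟩

theorem exists_notMem_range_algebraMap_of_finrank_ne_one (hK : Module.finrank F K ≠ 1) :
    ∃ θ : K, θ ∉ (algebraMap F K).range := by
  by_contra! h
  exact hK (Subalgebra.bot_eq_top_iff_finrank_eq_one.mp (eq_top_iff.mpr fun θ _ => h θ))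

theorem natDegree_minpoly_of_finrank_eq_two (hK : Module.finrank F K = 2) {θ : K}
    (hθ : θ ∉ (algebraMap F K).range) : (minpoly F θ).natDegree = 2 := by
  have : FiniteDimensional F K := .of_finrank_eq_succ hK
  exact le_antisymm (hK ▸ minpoly.natDegree_le θ)
    ((minpoly.two_le_natDegree_iff (.of_finite F θ)).mpr hθ)

theorem exists_eq_mul_add_of_finrank_eq_two (hK : Module.finrank F K = 2) {θ : K}
    (hθ : θ ∉ (algebraMap F K).range) (x : K) :
    ∃ p q : F, x = algebraMap F K q * θ + algebraMap F K p := by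
  have : FiniteDimensional F K := .of_finrank_eq_succ hK
  have hli : LinearIndependent F ![θ, 1] :=
    LinearIndependent.pair_symm_iff.mp <| (LinearIndependent.pair_iff' one_ne_zero).mpr fun a ha =>
      hθ ⟨a, (Algebra.algebraMap_eq_smul_one a).trans ha⟩
  have hspan : Submodule.span F {θ, 1} = ⊤ := by
    simpa only [Matrix.range_cons_cons_empty] using
      hli.span_eq_top_of_card_eq_finrank' (by simp [hK])
  have hx : x ∈ Submodule.span F {θ, 1} := hspan ▸ Submodule.mem_top
  obtain ⟨q, p, h⟩ := Submodule.mem_span_pair.mp hx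
  exact ⟨p, q, by rw [← h, Algebra.smul_def, Algebra.smul_def, mul_one]⟩

theorem mul_add_ne_zero_of_aeval_mul_add_eq_zero {σ : Type*} {f : MvPolynomial σ F} {n : ℕ}
    (hf : f.IsHomogeneous n) {p q : σ → F} (hq : eval q f ≠ 0) {θ : K}
    (hθ : θ ∉ (algebraMap F K).range)
    (h : aeval (fun i => algebraMap F K (q i) * θ + algebraMap F K (p i)) f = 0) (r : F) :
    (fun i => q i * r + p i) ≠ 0 := by
  intro hzero
  have hp (i : σ) : p i = -(q i * r) := eq_neg_of_add_eq_zero_right (congrFun hzero i)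
  have hscale (i : σ) : algebraMap F K (q i) * θ + algebraMap F K (p i) =
      (θ - algebraMap F K r) * algebraMap F K (q i) := by
    rw [hp, map_neg, map_mul]
    ring
  simp only [hscale] at h
  rw [aeval_const_mul_of_isHomogeneous hf] at h
  rcases mul_eq_zero.mp h with hpow | hfq
  · exact hθ ⟨r, (sub_eq_zero.mp (eq_zero_of_pow_eq_zero hpow)).symm⟩
  · exact hq ((aeval_algebraMap_eq_zero_iff K q f).mp hfq)

end QuadraticExtensions

theorem stmt16_general {F K σ : Type*} [Field F] [Field K] [Algebra F K]
    (hK : Module.finrank F K = 2) {f : MvPolynomial σ F} (hf : f.IsHomogeneous 3)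
    (h : ∃ x : σ → K, x ≠ 0 ∧ aeval x f = 0) : ∃ y : σ → F, y ≠ 0 ∧ aeval y f = 0 := by
  obtain ⟨x, hx, hfx⟩ := h
  obtain ⟨θ, hθ⟩ : ∃ θ : K, θ ∉ (algebraMap F K).range :=
    exists_notMem_range_algebraMap_of_finrank_ne_one (by lia)
  choose p q hpq using fun i => exists_eq_mul_add_of_finrank_eq_two hK hθ (x i)
  obtain rfl : x = fun i => algebraMap F K (q i) * θ + algebraMap F K (p i) := funext hpq
  by_cases hfq : eval q f = 0
  · obtain rfl | hq := eq_or_ne q 0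
    · simp only [Pi.zero_apply, map_zero, zero_mul, zero_add] at hx hfx
      refine ⟨p, ?_, (aeval_algebraMap_eq_zero_iff K p f).mp hfx⟩
      rintro rfl
      exact hx (by ext; exact map_zero _)
    · exact ⟨q, hq, hfq⟩
  · have hdeg : (lineRestriction f p q).natDegree = (minpoly F θ).natDegree + 1 := by
      rw [natDegree_lineRestriction hf p hfq, natDegree_minpoly_of_finrank_eq_two hK hθ]
    obtain ⟨r, hr⟩ := exists_isRoot_of_natDegree_eq_natDegree_minpoly_add_one hdeg
      ((aeval_lineRestriction f p q θ).trans hfx)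
    exact ⟨fun i => q i * r + p i, mul_add_ne_zero_of_aeval_mul_add_eq_zero hf hfq hθ hfx r,
      (aeval_lineRestriction f p q r).symm.trans hr⟩

/-- let `K` be a quadratic extension of `ℚ` and `a₁, a₂, a₃, a₄ ∈ ℚ*`.
If `a₁x₁³ + a₂x₂³ + a₃x₃³ + a₄x₄³ = 0` has a nontrivial `K`-point, then it has a
nontrivial `ℚ`-point. -/
theorem stmt16 (K : Type*) [Field K] [Algebra ℚ K] (hK : Module.finrank ℚ K = 2)
    (a₁ a₂ a₃ a₄ : ℚ) (ha₁ : a₁ ≠ 0) (ha₂ : a₂ ≠ 0) (ha₃ : a₃ ≠ 0) (ha₄ : a₄ ≠ 0)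
    (h : ∃ x₁ x₂ x₃ x₄ : K, ¬(x₁ = 0 ∧ x₂ = 0 ∧ x₃ = 0 ∧ x₄ = 0) ∧
        algebraMap ℚ K a₁ * x₁ ^ 3 + algebraMap ℚ K a₂ * x₂ ^ 3
          + algebraMap ℚ K a₃ * x₃ ^ 3 + algebraMap ℚ K a₄ * x₄ ^ 3 = 0) :
    ∃ y₁ y₂ y₃ y₄ : ℚ, ¬(y₁ = 0 ∧ y₂ = 0 ∧ y₃ = 0 ∧ y₄ = 0) ∧
      a₁ * y₁ ^ 3 + a₂ * y₂ ^ 3 + a₃ * y₃ ^ 3 + a₄ * y₄ ^ 3 = 0 := by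
  exact (exists_aeval_diagonalForm_fin_four_eq_zero_iff 3 a₁ a₂ a₃ a₄).mp <|
    stmt16_general hK (isHomogeneous_diagonalForm 3 _) <|
      (exists_aeval_diagonalForm_fin_four_eq_zero_iff 3 a₁ a₂ a₃ a₄).mpr h
end
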